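/- Let (X,f) be a TDS and μ ∈ M(X,f). For any ergodic decomposition τ of μ, E_μ(f) = ess sup{h_ν(f) : ν ∈ E(X,f)}, with the essential supremum taken with respect to τ. Consequently, E_μ(f) ≥ h_μ(f). -/

import Mathlib

open MeasureTheory Filter Set
open scoped ENNReal NNReal

namespace Paper

variable {X : Type*}

/-- Birkhoff sum `S_n φ(x) = ∑_{i<n} φ(f^i x)`. -/
def birk (f : X → X) (φ : X → ℝ) (n : ℕ) (x : X) : ℝ :=
  ∑ i ∈ Finset.range n, φ (f^[i] x)

section Metric

variable [MetricSpace X]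

/-- The Bowen ball `B_n(x, ε) = {y : d_n(x,y) < ε}`. -/
def bowenBall (f : X → X) (x : X) (n : ℕ) (ε : ℝ) : Set X :=
  {y | ∀ i < n, dist (f^[i] x) (f^[i] y) < ε}

/-- The number of indices `0 ≤ j ≤ n-1` with `dist (f^j x, f^j y) > ε`. -/
noncomputable def sepCount (f : X → X) (ε : ℝ) (n : ℕ) (x y : X) : ℕ :=
  Nat.card {j : ℕ // j < n ∧ ε < dist (f^[j] x) (f^[j] y)}

/-- `A` is an `(n,ε)`-separated set. -/
def IsNSep (f : X → X) (n : ℕ) (ε : ℝ) (A : Set X) : Prop :=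
  ∀ x ∈ A, ∀ y ∈ A, x ≠ y → ∃ j < n, ε < dist (f^[j] x) (f^[j] y)

/-- `A` is a `(δ,n,ε)`-separated set. -/
def IsDeltaSep (f : X → X) (δ : ℝ) (n : ℕ) (ε : ℝ) (A : Set X) : Prop :=
  ∀ x ∈ A, ∀ y ∈ A, x ≠ y → δ * n ≤ (sepCount f ε n x y : ℝ)

end Metric

section Entropy

variable [MeasurableSpace X]

/-- A finite measurable partition of `X`. -/
def IsFinPartition (s : Finset (Set X)) : Prop :=
  (∀ A ∈ s, MeasurableSet A) ∧ ⋃₀ (s : Set (Set X)) = Set.univ ∧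
    (s : Set (Set X)).Pairwise Disjoint

/-- The entropy `H(μ, ⋁_{i<n} f^{-i} ξ)` of the `n`-th dynamical refinement of the
partition `s` (with the convention `0 · log 0 = 0`). -/
noncomputable def dynH (f : X → X) (μ : Measure X) (s : Finset (Set X)) (n : ℕ) : ℝ :=
  -∑ w : Fin n → {A // A ∈ s},
      (μ (⋂ i : Fin n, f^[(i : ℕ)] ⁻¹' ((w i : Set X)))).toReal *
        Real.log (μ (⋂ i : Fin n, f^[(i : ℕ)] ⁻¹' ((w i : Set X)))).toReal

/-- The Kolmogorov–Sinai entropy `h_μ(f)`, as an extended real: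
`sup_ξ lim_n H(μ, ξ^n)/n`. -/
noncomputable def ksEntropy (f : X → X) (μ : Measure X) : EReal :=
  ⨆ (s : Finset (Set X)) (_ : IsFinPartition s),
    Filter.atTop.liminf (fun n : ℕ => ((dynH f μ s n / n : ℝ) : EReal))

end Entropy

section Pressure

variable [MetricSpace X] [MeasurableSpace X]

/-- Brin–Katok local entropy `h_μ(x) = lim_{ε→0} liminf_n -(1/n) log μ(B_n(x,ε))`
(the limit in `ε` being a supremum by monotonicity). -/
noncomputable def localEntropy (f : X → X) (μ : Measure X) (x : X) : EReal :=
  ⨆ (ε : ℝ) (_ : 0 < ε),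
    Filter.atTop.liminf (fun n : ℕ =>
      (((n : ℝ)⁻¹ : ℝ) : EReal) * (-(μ (bowenBall f x n ε)).log))

/-- The point-wise measure theoretic pressure
`P_μ(f,φ,x) = lim_{ε→0} liminf_n (1/n)[-log μ(B_n(x,ε)) + S_nφ(x)]`. -/
noncomputable def ptPressure (f : X → X) (φ : X → ℝ) (μ : Measure X) (x : X) : EReal :=
  ⨆ (ε : ℝ) (_ : 0 < ε),
    Filter.atTop.liminf (fun n : ℕ =>
      (((n : ℝ)⁻¹ : ℝ) : EReal) * (-(μ (bowenBall f x n ε)).log + ((birk f φ n x : ℝ) : EReal)))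

/-- `M(Z,φ,α,N,ε)`: infimum of `∑_i exp(-α n_i + S_{n_i}φ(x_i))` over countable covers
of `Z` by Bowen balls `B_{n_i}(x_i,ε)` with `n_i ≥ N`. -/
noncomputable def Mcov (f : X → X) (φ : X → ℝ) (Z : Set X) (α : ℝ) (N : ℕ) (ε : ℝ) : ℝ≥0∞ :=
  ⨅ (c : ℕ → X × ℕ)
    (_ : (∀ i, N ≤ (c i).2) ∧ Z ⊆ ⋃ i, bowenBall f (c i).1 (c i).2 ε),
      ∑' i, ENNReal.ofReal (Real.exp (-α * ((c i).2 : ℝ) + birk f φ (c i).2 (c i).1))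

/-- `m(Z,φ,α,ε) = lim_{N→∞} M(Z,φ,α,N,ε)` (a supremum, by monotonicity in `N`). -/
noncomputable def mZ (f : X → X) (φ : X → ℝ) (Z : Set X) (α : ℝ) (ε : ℝ) : ℝ≥0∞ :=
  ⨆ N : ℕ, Mcov f φ Z α N ε

/-- `P_Z(f,φ,ε) = inf {α : m(Z,φ,α,ε) = 0}`, the jump-up point of `α ↦ m(Z,φ,α,ε)`. -/
noncomputable def PZeps (f : X → X) (φ : X → ℝ) (Z : Set X) (ε : ℝ) : EReal :=
  ⨅ (α : ℝ) (_ : mZ f φ Z α ε = 0), ((α : ℝ) : EReal)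

/-- The topological pressure `P_Z(f,φ) = lim_{ε→0} P_Z(f,φ,ε)` on an arbitrary set `Z`
(the limit in `ε` being a supremum by monotonicity). -/
noncomputable def PZ (f : X → X) (φ : X → ℝ) (Z : Set X) : EReal :=
  ⨆ (ε : ℝ) (_ : 0 < ε), PZeps f φ Z ε

/-- The measure theoretic pressure
`P_μ(f,φ) = lim_{ε→0} inf {P_Z(f,φ,ε) : Z Borel, μ(Z) = 1}`. -/
noncomputable def Pmu (f : X → X) (φ : X → ℝ) (μ : Measure X) : EReal :=
  ⨆ (ε : ℝ) (_ : 0 < ε),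
    ⨅ (Z : Set X) (_ : MeasurableSet Z ∧ μ Z = 1), PZeps f φ Z ε

end Pressure

noncomputable instance {Y : Type*} [MeasurableSpace Y] [TopologicalSpace Y]
    [OpensMeasurableSpace Y] : MeasurableSpace (ProbabilityMeasure Y) := borel _

section Decomp

variable [MeasurableSpace X] [TopologicalSpace X] [OpensMeasurableSpace X]

/-- `τ` is an ergodic decomposition of the invariant measure `μ` (supported on `J`):
a Borel probability measure on the space `M(X)` of Borel probability measures with the
weak-star topology, giving full measure to the ergodic measures with full measure on `J`,
and such that `∫ ψ dμ = ∫ (∫ ψ dν) dτ(ν)` for every `ψ ∈ L¹(μ)`. -/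
def IsErgodicDecomp (f : X → X) (J : Set X) (μ : Measure X)
    (τ : Measure (ProbabilityMeasure X)) : Prop :=
  IsProbabilityMeasure τ ∧
  τ {ν : ProbabilityMeasure X | Ergodic f ν.toMeasure ∧ ν.toMeasure J = 1} = 1 ∧
  ∀ ψ : X → ℝ, Integrable ψ μ →
    ∫ x, ψ x ∂μ = ∫ ν : ProbabilityMeasure X, (∫ x, ψ x ∂ν.toMeasure) ∂τ

end Decomp

end Paper

open Paper

/-!
Entropy is compared with coverings through codes.

* `h_μ(f) ≤ E_μ(f)` for every invariant `μ`: suppose that Bowen balls of lengths `n_i` with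
  `∑ exp (-α n_i) ≤ 1` cover a set of full measure. Off a set of small measure, the itinerary of a
  point is that of the centre of its ball for `n_i` units of time, so that it can be transmitted at
  the price of naming the ball, about `α n_i`. Gibbs' inequality bounds the entropy rate by the mean
  cost of this code, which is close to `α`.
* For a given `b < α` and a partition into small pieces there is a single Borel set `Z` with
  `m(Z, 0, α, ε) = 0` and `ν Z = 1` for all ergodic `ν` with `h_ν(f) < b`. Indeed such a `ν` has a
  conditional code with rational code lengths of mean less than `b`. By ergodicity `ν`-almost every
  orbit is encoded infinitely often at a rate less than `b`, few words are encoded that cheaply, and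
  there are only countably many rational codes.

Both bounds pass to `μ`, since `μ Z = 1` if and only if `ν Z = 1` for `τ`-almost every `ν`; the
first one applies to `μ` itself as well.
-/

namespace Paper

section Words

variable {X ι : Type*}

/-- The `n`-itinerary of `x` under `f` with respect to the coding map `a`: the word of the symbols
of `x, f x, …, f^(n-1) x`. -/
def itinerary (f : X → X) (a : X → ι) (n : ℕ) (x : X) : Fin n → ι := fun i => a (f^[i] x)

variable [MeasurableSpace X]

/-- The probability that the `n`-itinerary of a `μ`-random point is the word `w`, that is, the
measure of the cylinder of `w`. -/
noncomputable def wordProb (f : X → X) (a : X → ι) (μ : Measure X) {n : ℕ} (w : Fin n → ι) : ℝ :=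
  μ.real (itinerary f a n ⁻¹' {w})

/-- The Shannon entropy of the `n`-itinerary of a `μ`-random point. Coding maps play the role of
partitions into labelled, possibly empty, pieces. -/
noncomputable def blockEntropy [Fintype ι] (f : X → X) (a : X → ι) (μ : Measure X) (n : ℕ) : ℝ :=
  ∑ w : Fin n → ι, Real.negMulLog (wordProb f a μ w)

lemma wordProb_nonneg (f : X → X) (a : X → ι) (μ : Measure X) {n : ℕ} (w : Fin n → ι) :
    0 ≤ wordProb f a μ w :=
  measureReal_nonneg

lemma IsFinPartition.exists_coding {s : Finset (Set X)} (hs : IsFinPartition s) :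
    ∃ a : X → Fin s.card, Measurable a ∧ (∀ i, a ⁻¹' {i} ∈ s) ∧
      ∀ (f : X → X) (μ : Measure X) (n : ℕ), dynH f μ s n = blockEntropy f a μ n := by
  obtain ⟨hmeas, hcover, hdisj⟩ := hs
  have hpiece (x : X) : ∃ A : {A // A ∈ s}, x ∈ A.1 := by
    obtain ⟨A, hA, hx⟩ := mem_sUnion.1 (hcover ▸ mem_univ x)
    exact ⟨⟨A, hA⟩, hx⟩
  choose piece mem_piece using hpiece
  have piece_eq_iff (x : X) (A : {A // A ∈ s}) : piece x = A ↔ x ∈ A.1 := by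
    refine ⟨fun h => h ▸ mem_piece x, fun hx => Subtype.ext ?_⟩
    by_contra hne
    exact disjoint_left.1 (hdisj (piece x).2 A.2 hne) (mem_piece x) hx
  set e := s.equivFin
  have preimage_eq (i : Fin s.card) : (fun x => e (piece x)) ⁻¹' {i} = (e.symm i).1 := by
    ext x
    rw [mem_preimage, mem_singleton_iff, ← piece_eq_iff, Equiv.eq_symm_apply]
  refine ⟨fun x => e (piece x), measurable_to_countable' fun i => ?_, fun i => ?_,
    fun f μ n => ?_⟩
  · exact preimage_eq i ▸ hmeas _ (e.symm i).2
  · exact preimage_eq i ▸ (e.symm i).2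
  have cylinder_eq (w : Fin n → {A // A ∈ s}) : itinerary f (fun x => e (piece x)) n ⁻¹' {e ∘ w} =
      ⋂ i : Fin n, f^[i] ⁻¹' (w i : Set X) := by
    ext x
    simp only [mem_preimage, mem_singleton_iff, funext_iff, itinerary, Function.comp_apply,
      EmbeddingLike.apply_eq_iff_eq, piece_eq_iff, mem_iInter]
  rw [dynH, blockEntropy, ← Finset.sum_neg_distrib]
  refine Fintype.sum_equiv ((Equiv.refl (Fin n)).arrowCongr e) _ _ fun w => ?_
  rw [← neg_mul, ← cylinder_eq w]
  rfl

end Words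

section Entropy

variable {X ι : Type*} [MeasurableSpace X] {f : X → X} {a : X → ι} {μ : Measure X} {n : ℕ}

lemma measurable_itinerary [MeasurableSpace ι] (hf : Measurable f) (ha : Measurable a) :
    Measurable (itinerary f a n) :=
  measurable_pi_lambda _ fun i => ha.comp (hf.iterate i)

lemma integral_comp_itinerary [MeasurableSpace ι] [MeasurableSingletonClass ι] [Fintype ι]
    [IsFiniteMeasure μ] (hf : Measurable f) (ha : Measurable a) (F : (Fin n → ι) → ℝ) :
    ∫ x, F (itinerary f a n x) ∂μ = ∑ w, wordProb f a μ w * F w := by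
  have hitin : Measurable (itinerary f a n) := measurable_itinerary hf ha
  rw [← integral_map hitin.aemeasurable (measurable_of_finite F).aestronglyMeasurable,
    integral_fintype .of_finite]
  exact Finset.sum_congr rfl fun w _ => by
    rw [smul_eq_mul, map_measureReal_apply hitin (measurableSet_singleton w), wordProb]

lemma integrable_comp_itinerary [MeasurableSpace ι] [MeasurableSingletonClass ι] [Finite ι]
    [IsFiniteMeasure μ] (hf : Measurable f) (ha : Measurable a) (F : (Fin n → ι) → ℝ) :
    Integrable (fun x => F (itinerary f a n x)) μ :=
  (Integrable.of_finite (f := F)).comp_measurable (measurable_itinerary hf ha)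

lemma sum_wordProb [MeasurableSpace ι] [MeasurableSingletonClass ι] [Fintype ι]
    [IsProbabilityMeasure μ] (hf : Measurable f) (ha : Measurable a) :
    ∑ w : Fin n → ι, wordProb f a μ w = 1 := by
  simpa using (integral_comp_itinerary (μ := μ) hf ha fun _ : Fin n → ι => 1).symm

lemma integral_birkhoffSum (hf : MeasurePreserving f μ μ) {φ : X → ℝ} (hφ : Integrable φ μ) :
    ∫ x, birkhoffSum f φ n x ∂μ = n * ∫ x, φ x ∂μ := by
  simp only [birkhoffSum]
  rw [integral_finsetSum _ (f := fun i x => φ (f^[i] x))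
    fun i _ => (hf.iterate i).integrable_comp_of_integrable hφ]
  have (i : ℕ) : ∫ x, φ (f^[i] x) ∂μ = ∫ x, φ x ∂μ := by
    have hi := hf.iterate i
    rw [← integral_map hi.measurable.aemeasurable (hi.map_eq.symm ▸ hφ.1), hi.map_eq]
  simp [this]

lemma integrable_birkhoffSum (hf : MeasurePreserving f μ μ) {φ : X → ℝ} (hφ : Integrable φ μ) :
    Integrable (birkhoffSum f φ n) μ :=
  integrable_finsetSum _ fun i _ => (hf.iterate i).integrable_comp_of_integrable hφ

lemma sum_negMulLog_le_sum_mul_neg_log {α : Type*} [Fintype α] {p q : α → ℝ} (hp : ∀ i, 0 ≤ p i)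
    (hp_sum : ∑ i, p i = 1) (hq : ∀ i, 0 ≤ q i) (hq_sum : ∑ i, q i ≤ 1)
    (hpq : ∀ i, q i = 0 → p i = 0) :
    ∑ i, Real.negMulLog (p i) ≤ ∑ i, p i * -Real.log (q i) := by
  have termwise (i : α) : Real.negMulLog (p i) ≤ p i * -Real.log (q i) + (q i - p i) := by
    rcases (hp i).eq_or_lt with hpi | hpi
    · simpa [← hpi] using hq i
    have hqi : 0 < q i := (hq i).lt_of_ne' fun h => hpi.ne' (hpq i h)
    have hlog := mul_le_mul_of_nonneg_left
      (Real.log_le_sub_one_of_pos (div_pos hqi hpi)) hpi.le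
    rw [Real.log_div hqi.ne' hpi.ne', mul_sub, mul_sub, mul_div_cancel₀ _ hpi.ne'] at hlog
    rw [Real.negMulLog]
    linarith
  calc ∑ i, Real.negMulLog (p i) ≤ ∑ i, (p i * -Real.log (q i) + (q i - p i)) :=
        Finset.sum_le_sum fun i _ => termwise i
    _ ≤ ∑ i, p i * -Real.log (q i) := by
        rw [Finset.sum_add_distrib, Finset.sum_sub_distrib]
        linarith

lemma blockEntropy_le_integral [MeasurableSpace ι] [MeasurableSingletonClass ι] [Fintype ι]
    [IsProbabilityMeasure μ] (hf : Measurable f) (ha : Measurable a) {q : (Fin n → ι) → ℝ}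
    (hq : ∀ w, 0 ≤ q w) (hq_sum : ∑ w, q w ≤ 1) {F : X → ℝ} (hF : Integrable F μ)
    (hFq : ∀ x, Real.exp (-F x) ≤ q (itinerary f a n x)) :
    blockEntropy f a μ n ≤ ∫ x, F x ∂μ := by
  have hpq (w : Fin n → ι) (hw : q w = 0) : wordProb f a μ w = 0 := by
    have : itinerary f a n ⁻¹' {w} = ∅ := by
      refine eq_empty_of_forall_notMem fun x hx => (Real.exp_pos (-F x)).not_ge ?_
      rw [← hw, ← mem_singleton_iff.1 hx]
      exact hFq x
    simp [wordProb, this]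
  calc blockEntropy f a μ n ≤ ∑ w, wordProb f a μ w * -Real.log (q w) :=
        sum_negMulLog_le_sum_mul_neg_log (wordProb_nonneg f a μ) (sum_wordProb hf ha) hq hq_sum hpq
    _ = ∫ x, -Real.log (q (itinerary f a n x)) ∂μ :=
        (integral_comp_itinerary hf ha fun w => -Real.log (q w)).symm
    _ ≤ ∫ x, F x ∂μ := by
        refine integral_mono (integrable_comp_itinerary hf ha fun w => -Real.log (q w)) hF ?_
        intro x
        have := Real.log_le_log (Real.exp_pos _) (hFq x)
        rw [Real.log_exp] at this
        exact neg_le.1 this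

end Entropy

section Smoothing

variable {α : Type*} [Fintype α] {δ : ℝ} {r : α → ℝ}

/-- The mixture of the weights `r` with the uniform distribution, in the proportion
`e^(-δ) : 1 - e^(-δ)`. It is bounded below and costs at most `δ` more than `r` in code length. -/
noncomputable def smoothing (δ : ℝ) (r : α → ℝ) (i : α) : ℝ :=
  Real.exp (-δ) * r i + (1 - Real.exp (-δ)) / Fintype.card α

lemma one_sub_exp_neg_nonneg (hδ : 0 ≤ δ) : 0 ≤ 1 - Real.exp (-δ) :=
  sub_nonneg.2 (Real.exp_le_one_iff.2 (neg_nonpos.2 hδ))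

lemma exp_neg_mul_le_smoothing (hδ : 0 ≤ δ) (i : α) : Real.exp (-δ) * r i ≤ smoothing δ r i :=
  le_add_of_nonneg_right (div_nonneg (one_sub_exp_neg_nonneg hδ) (Nat.cast_nonneg _))

lemma uniform_le_smoothing {i : α} (hr : 0 ≤ r i) :
    (1 - Real.exp (-δ)) / Fintype.card α ≤ smoothing δ r i :=
  le_add_of_nonneg_left (mul_nonneg (Real.exp_nonneg _) hr)

lemma smoothing_pos (hδ : 0 < δ) {i : α} (hr : 0 ≤ r i) : 0 < smoothing δ r i := by
  have : Nonempty α := ⟨i⟩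
  refine (div_pos (sub_pos.2 ?_) (Nat.cast_pos.2 Fintype.card_pos)).trans_le
    (uniform_le_smoothing hr)
  exact Real.exp_lt_one_iff.2 (neg_lt_zero.2 hδ)

lemma sum_smoothing_le_one (hδ : 0 ≤ δ) (hr : ∑ i, r i ≤ 1) : ∑ i, smoothing δ r i ≤ 1 := by
  have huniform : ∑ _i : α, (1 - Real.exp (-δ)) / Fintype.card α ≤ 1 - Real.exp (-δ) := by
    rw [Finset.sum_const, Finset.card_univ, nsmul_eq_mul]
    rcases eq_or_ne (Fintype.card α : ℝ) 0 with hα | hα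
    · simpa [hα] using hδ
    · rw [mul_div_cancel₀ _ hα]
  simp only [smoothing, Finset.sum_add_distrib, ← Finset.mul_sum]
  linarith [mul_le_mul_of_nonneg_left hr (Real.exp_nonneg (-δ))]

end Smoothing

section BlockCodes

variable {X ι B : Type*}

/-- The word `w` without its first `m` letters. -/
def dropWord {L : ℕ} (m : ℕ) (w : Fin L → ι) : Fin (L - m) → ι :=
  fun i => w ⟨m + i, by omega⟩

lemma take_itinerary (f : X → X) (a : X → ι) {m L : ℕ} (h : m ≤ L) (x : X) :
    Fin.take m h (itinerary f a L x) = itinerary f a m x :=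
  rfl

lemma dropWord_itinerary (f : X → X) (a : X → ι) (m L : ℕ) (x : X) :
    dropWord m (itinerary f a L x) = itinerary f a (L - m) (f^[m] x) := by
  ext i
  simp only [dropWord, itinerary, ← Function.iterate_add_apply, add_comm]

lemma sum_take_mul_dropWord [Fintype ι] {m L : ℕ} (h : m ≤ L) (F : (Fin m → ι) → ℝ)
    (G : (Fin (L - m) → ι) → ℝ) :
    ∑ w : Fin L → ι, F (Fin.take m h w) * G (dropWord m w) = (∑ u, F u) * ∑ v, G v := by
  let concat : (Fin m → ι) × (Fin (L - m) → ι) ≃ (Fin L → ι) :=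
    (Fin.appendEquiv m (L - m)).trans
      ((finCongr (Nat.add_sub_cancel' h)).arrowCongr (Equiv.refl ι))
  have take_concat (p) : Fin.take m h (concat p) = p.1 :=
    funext fun i => Fin.append_left p.1 p.2 i
  have drop_concat (p) : dropWord m (concat p) = p.2 :=
    funext fun i => Fin.append_right p.1 p.2 i
  rw [← concat.sum_comp, Fintype.sum_prod_type, Finset.sum_mul_sum]
  simp only [take_concat, drop_concat]

/-- A randomized block code over the alphabet `ι`: each block `b` has a positive length and a
weight on the words of that length, and the weights satisfy Kraft's inequality. -/
structure BlockCode (ι B : Type*) [Fintype ι] [Fintype B] where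
  len : B → ℕ
  len_pos (b : B) : 0 < len b
  weight (b : B) : (Fin (len b) → ι) → ℝ
  weight_nonneg (b : B) (u : Fin (len b) → ι) : 0 ≤ weight b u
  kraft : ∑ b, ∑ u, weight b u ≤ 1

namespace BlockCode

variable [Fintype ι] [Fintype B]

/-- The total weight of a word of length `L`: the sum, over all its parsings into consecutive
blocks, of the product of the weights of the blocks. -/
noncomputable def wordWeight (C : BlockCode ι B) : (L : ℕ) → (Fin L → ι) → ℝ
  | 0, _ => 1
  | L + 1, w => ∑ b, if h : C.len b ≤ L + 1 then
      C.weight b (Fin.take _ h w) * C.wordWeight (L + 1 - C.len b) (dropWord _ w) else 0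
termination_by L => L
decreasing_by have := C.len_pos b; omega

lemma wordWeight_nonneg (C : BlockCode ι B) (L : ℕ) (w : Fin L → ι) : 0 ≤ C.wordWeight L w := by
  induction L using Nat.strong_induction_on with
  | _ L ih =>
    cases L with
    | zero => simp [wordWeight]
    | succ L =>
      rw [wordWeight]
      refine Finset.sum_nonneg fun b _ => ?_
      split_ifs with h
      · exact mul_nonneg (C.weight_nonneg _ _) (ih _ (by have := C.len_pos b; omega) _)
      · rfl

lemma sum_wordWeight_le_one (C : BlockCode ι B) (L : ℕ) : ∑ w, C.wordWeight L w ≤ 1 := by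
  induction L using Nat.strong_induction_on with
  | _ L ih =>
    cases L with
    | zero => simp [wordWeight]
    | succ L =>
      simp only [wordWeight]
      rw [Finset.sum_comm]
      refine (Finset.sum_le_sum fun b _ => ?_).trans C.kraft
      have hb : 0 ≤ ∑ u, C.weight b u := Finset.sum_nonneg fun u _ => C.weight_nonneg b u
      split_ifs with h
      · rw [sum_take_mul_dropWord]
        exact mul_le_of_le_one_right hb (ih _ (by have := C.len_pos b; omega))
      · simpa using hb

lemma weight_mul_wordWeight_le (C : BlockCode ι B) {L : ℕ} {b : B} (h : C.len b ≤ L)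
    (w : Fin L → ι) :
    C.weight b (Fin.take _ h w) * C.wordWeight (L - C.len b) (dropWord _ w) ≤
      C.wordWeight L w := by
  obtain ⟨L, rfl⟩ := Nat.exists_eq_add_one.2 ((C.len_pos b).trans_le h)
  let parsing (b : B) : ℝ := if h : C.len b ≤ L + 1 then
    C.weight b (Fin.take _ h w) * C.wordWeight (L + 1 - C.len b) (dropWord _ w) else 0
  have parsing_nonneg (b : B) : 0 ≤ parsing b := by
    unfold parsing
    split_ifs
    exacts [mul_nonneg (C.weight_nonneg _ _) (C.wordWeight_nonneg _ _), le_rfl]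
  have := Finset.single_le_sum (fun b _ => parsing_nonneg b) (Finset.mem_univ b)
  rw [wordWeight]
  simpa only [parsing, h, dite_true] using this

variable {f : X → X} {a : X → ι} {c : X → ℝ} {D : ℝ} {M : ℕ}

lemma exp_neg_add_le_wordWeight_itinerary (C : BlockCode ι B) {b : B} {L : ℕ} {x : X} {s t : ℝ}
    (h : C.len b ≤ L) (hb : Real.exp (-s) ≤ C.weight b (itinerary f a (C.len b) x))
    (ht : Real.exp (-t) ≤
      C.wordWeight (L - C.len b) (itinerary f a (L - C.len b) (f^[C.len b] x))) :
    Real.exp (-(s + t)) ≤ C.wordWeight L (itinerary f a L x) := by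
  rw [neg_add, Real.exp_add]
  refine (mul_le_mul hb ht (Real.exp_nonneg _) (C.weight_nonneg _ _)).trans ?_
  rw [← dropWord_itinerary, ← take_itinerary f a h]
  exact C.weight_mul_wordWeight_le h _

lemma exp_neg_mul_le_wordWeight_itinerary (C : BlockCode ι B) {b₀ : B} (hlen : C.len b₀ = 1)
    (hD : ∀ u, Real.exp (-D) ≤ C.weight b₀ u) (L : ℕ) (x : X) :
    Real.exp (-(L * D)) ≤ C.wordWeight L (itinerary f a L x) := by
  induction L generalizing x with
  | zero => simp [wordWeight]
  | succ L ih =>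
    have := C.exp_neg_add_le_wordWeight_itinerary (t := L * D) (L := L + 1) (by omega)
      (hD (itinerary f a _ x)) (by rw [hlen]; exact ih (f x))
    rwa [Nat.cast_succ, add_one_mul, add_comm]

/- Blocks are peeled off greedily; the last `M` symbols at most are coded one by one. -/
lemma exp_neg_birkhoffSum_le_wordWeight_itinerary (C : BlockCode ι B) (hc : ∀ x, 0 ≤ c x)
    (hD₀ : 0 ≤ D) {b₀ : B} (hlen : C.len b₀ = 1) (hD : ∀ u, Real.exp (-D) ≤ C.weight b₀ u)
    (hparse : ∀ x, ∃ b, C.len b ≤ M ∧ Real.exp (-birkhoffSum f c (C.len b) x) ≤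
      C.weight b (itinerary f a (C.len b) x)) (L : ℕ) (x : X) :
    Real.exp (-(birkhoffSum f c L x + M * D)) ≤ C.wordWeight L (itinerary f a L x) := by
  induction L using Nat.strong_induction_on generalizing x with
  | _ L ih =>
    obtain ⟨b, hbM, hb⟩ := hparse x
    rcases le_or_gt (C.len b) L with hbL | hbL
    · have hrest := ih (L - C.len b) (by have := C.len_pos b; omega) (f^[C.len b] x)
      have := C.exp_neg_add_le_wordWeight_itinerary hbL hb hrest
      rwa [← add_assoc, ← birkhoffSum_add, Nat.add_sub_cancel' hbL] at this
    · refine le_trans (Real.exp_le_exp.2 (neg_le_neg ?_))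
        (C.exp_neg_mul_le_wordWeight_itinerary hlen hD L x)
      have hLM : (L : ℝ) ≤ M := Nat.cast_le.2 (hbL.le.trans hbM)
      have hsum : 0 ≤ birkhoffSum f c L x := Finset.sum_nonneg fun i _ => hc _
      linarith [mul_le_mul_of_nonneg_right hLM hD₀]

lemma blockEntropy_le [MeasurableSpace X] [MeasurableSpace ι] [MeasurableSingletonClass ι]
    {μ : Measure X} [IsProbabilityMeasure μ] (hf : MeasurePreserving f μ μ) (ha : Measurable a)
    (C : BlockCode ι B) (hc : ∀ x, 0 ≤ c x) (hcμ : Integrable c μ)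
    (hD₀ : 0 ≤ D) {b₀ : B} (hlen : C.len b₀ = 1) (hD : ∀ u, Real.exp (-D) ≤ C.weight b₀ u)
    (hparse : ∀ x, ∃ b, C.len b ≤ M ∧ Real.exp (-birkhoffSum f c (C.len b) x) ≤
      C.weight b (itinerary f a (C.len b) x)) (L : ℕ) :
    blockEntropy f a μ L ≤ L * ∫ x, c x ∂μ + M * D := by
  have hint : Integrable (birkhoffSum f c L) μ := integrable_birkhoffSum hf hcμ
  calc blockEntropy f a μ L ≤ ∫ x, (birkhoffSum f c L x + M * D) ∂μ :=
        blockEntropy_le_integral hf.measurable ha (C.wordWeight_nonneg L)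
          (C.sum_wordWeight_le_one L) (hint.add (integrable_const _))
          (C.exp_neg_birkhoffSum_le_wordWeight_itinerary hc hD₀ hlen hD hparse L)
    _ = L * ∫ x, c x ∂μ + M * D := by
        rw [integral_add hint (integrable_const _), integral_birkhoffSum hf hcμ]
        simp

end BlockCode

end BlockCodes

section ShadowCode

variable {X ι I : Type*} [Fintype ι] [Fintype I]

lemma sum_prod_smoothing_single_le_one [DecidableEq ι] {κ : ℝ} (hκ : 0 ≤ κ) {m : ℕ}
    (v : Fin m → ι) : ∑ u : Fin m → ι, ∏ j, smoothing κ (Pi.single (v j) 1) (u j) ≤ 1 := by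
  rw [← Fintype.prod_sum fun j k => smoothing κ (Pi.single (v j) (1 : ℝ)) k]
  refine Finset.prod_le_one (fun j _ => Finset.sum_nonneg fun k _ => ?_) fun j _ =>
    sum_smoothing_le_one hκ (by simp)
  exact (mul_nonneg (Real.exp_nonneg _) (by rw [Pi.single_apply]; positivity)).trans
    (exp_neg_mul_le_smoothing hκ k)

/-- The code that either transmits a single letter (the block `none`), or names a reference word
`v i` and transmits a word of the same length that differs from it in few places. -/
noncomputable def shadowCode [DecidableEq ι] {α κ : ℝ} (hκ : 0 ≤ κ) (n : I → ℕ)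
    (hn : ∀ i, 0 < n i) (hα : ∑ i, Real.exp (-α * n i) ≤ 1) (v : (i : I) → Fin (n i) → ι) :
    BlockCode ι (Option I) where
  len b := b.elim 1 n
  len_pos
    | none => one_pos
    | some i => hn i
  weight
    | none => fun _ => 1 / (2 * Fintype.card ι)
    | some i => fun u =>
      Real.exp (-α * n i) / 2 * ∏ j, smoothing κ (Pi.single (v i j) 1) (u j)
  weight_nonneg
    | none, _ => by positivity
    | some i, u => mul_nonneg (by positivity) <| Finset.prod_nonneg fun j _ =>
        (mul_nonneg (Real.exp_nonneg _) (by rw [Pi.single_apply]; positivity)).trans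
          (exp_neg_mul_le_smoothing hκ _)
  kraft := by
    have hnone : ∑ _u : Fin 1 → ι, 1 / (2 * Fintype.card ι : ℝ) ≤ 1 / 2 := by
      rcases eq_or_ne (Fintype.card ι : ℝ) 0 with hι | hι
      · simp [hι]
      · simp [hι, mul_comm]
    have hsome (i : I) : ∑ u : Fin (n i) → ι,
        Real.exp (-α * n i) / 2 * ∏ j, smoothing κ (Pi.single (v i j) 1) (u j) ≤
          Real.exp (-α * n i) / 2 := by
      rw [← Finset.mul_sum]
      exact mul_le_of_le_one_right (by positivity) (sum_prod_smoothing_single_le_one hκ (v i))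
    rw [Fintype.sum_option]
    refine (add_le_add hnone (Finset.sum_le_sum fun i _ => hsome i)).trans ?_
    rw [← Finset.sum_div]
    linarith

variable {f : X → X} {a : X → ι} {α κ D : ℝ} {n : I → ℕ} {v : (i : I) → Fin (n i) → ι}
  {E : Set X} {N : ℕ}

lemma exp_neg_le_smoothing_single [DecidableEq ι] (hκ : 0 ≤ κ)
    (hDκ : Real.exp (-D) ≤ (1 - Real.exp (-κ)) / Fintype.card ι) {r k : ι} {x : X}
    (hx : x ∉ E → k = r) :
    Real.exp (-(κ + E.indicator (fun _ => D) x)) ≤ smoothing κ (Pi.single r 1) k := by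
  by_cases hE : x ∈ E
  · rw [indicator_of_mem hE]
    refine (Real.exp_le_exp.2 (by linarith)).trans (hDκ.trans (uniform_le_smoothing ?_))
    rw [Pi.single_apply]
    positivity
  · rw [indicator_of_notMem hE, add_zero, hx hE]
    simpa using exp_neg_mul_le_smoothing (r := Pi.single r 1) hκ r

/-- The cost per letter of `shadowCode` along an orbit that is shadowed outside of `E`. -/
noncomputable def shadowCost (α κ D : ℝ) (N : ℕ) (E : Set X) (x : X) : ℝ :=
  α + Real.log 2 / N + κ + E.indicator (fun _ => D) x

lemma exp_neg_birkhoffSum_shadowCost_le [DecidableEq ι] (hκ : 0 ≤ κ) (hN : 0 < N) {m : ℕ}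
    (hNm : N ≤ m) (hDκ : Real.exp (-D) ≤ (1 - Real.exp (-κ)) / Fintype.card ι) {v : Fin m → ι}
    {x : X} (hx : ∀ j : Fin m, f^[j] x ∉ E → a (f^[j] x) = v j) :
    Real.exp (-birkhoffSum f (shadowCost α κ D N E) m x) ≤
      Real.exp (-α * m) / 2 * ∏ j, smoothing κ (Pi.single (v j) 1) (itinerary f a m x j) := by
  have hlog : Real.log 2 ≤ m * (Real.log 2 / N) := by
    rw [mul_div_left_comm]
    refine le_mul_of_one_le_right (Real.log_nonneg one_le_two) ?_
    rw [one_le_div (Nat.cast_pos.2 hN)]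
    exact Nat.cast_le.2 hNm
  have hsum : birkhoffSum f (shadowCost α κ D N E) m x =
      m * (α + Real.log 2 / N) + ∑ j : Fin m, (κ + E.indicator (fun _ => D) (f^[j] x)) := by
    rw [Fin.sum_univ_eq_sum_range fun j => κ + E.indicator (fun _ => D) (f^[j] x)]
    simp [birkhoffSum, shadowCost, Finset.sum_add_distrib, mul_add, add_assoc]
  calc Real.exp (-birkhoffSum f (shadowCost α κ D N E) m x)
      ≤ Real.exp (-α * m - Real.log 2 +
          ∑ j : Fin m, -(κ + E.indicator (fun _ => D) (f^[j] x))) :=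
        Real.exp_le_exp.2 (by rw [hsum, Finset.sum_neg_distrib]; linarith)
    _ = Real.exp (-α * m) / 2 *
          ∏ j : Fin m, Real.exp (-(κ + E.indicator (fun _ => D) (f^[j] x))) := by
        rw [Real.exp_add, Real.exp_sub, Real.exp_log two_pos, Real.exp_sum]
    _ ≤ _ := by
        refine mul_le_mul_of_nonneg_left ?_ (by positivity)
        exact Finset.prod_le_prod (fun _ _ => Real.exp_nonneg _) fun j _ =>
          exp_neg_le_smoothing_single hκ hDκ (hx j)

lemma shadowCost_nonneg (hα : 0 ≤ α) (hκ : 0 ≤ κ) (hD : 0 ≤ D) (x : X) :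
    0 ≤ shadowCost α κ D N E x :=
  add_nonneg (by positivity) (indicator_nonneg (fun _ _ => hD) x)

lemma le_shadowCost (hα : 0 ≤ α) (hκ : 0 ≤ κ) {x : X} (hx : x ∈ E) :
    D ≤ shadowCost α κ D N E x := by
  rw [shadowCost, indicator_of_mem hx]
  exact le_add_of_nonneg_left (by positivity)

section Integral

variable [MeasurableSpace X] {μ : Measure X} [IsProbabilityMeasure μ]

lemma integrable_shadowCost (hE : MeasurableSet E) : Integrable (shadowCost α κ D N E) μ :=
  (integrable_const _).add ((integrable_const D).indicator hE)

lemma integral_shadowCost (hE : MeasurableSet E) :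
    ∫ x, shadowCost α κ D N E x ∂μ = α + Real.log 2 / N + κ + D * μ.real E := by
  simp only [shadowCost]
  rw [integral_add (integrable_const _) ((integrable_const D).indicator hE)]
  simp [integral_indicator hE, mul_comm]

end Integral

lemma liminf_div_le_of_le_mul_add {u : ℕ → ℝ} {c K : ℝ} (h : ∀ n, u n ≤ n * c + K) :
    atTop.liminf (fun n : ℕ => ((u n / n : ℝ) : EReal)) ≤ c := by
  have hlim : Tendsto (fun n : ℕ => ((c + K / n : ℝ) : EReal)) atTop (nhds (c : EReal)) := by
    refine continuous_coe_real_ereal.continuousAt.tendsto.comp ?_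
    simpa using tendsto_const_nhds.add (tendsto_const_div_atTop_nhds_zero_nat K)
  rw [← hlim.liminf_eq]
  refine liminf_le_liminf ((eventually_gt_atTop 0).mono fun n hn => EReal.coe_le_coe_iff.2 ?_)
  have hn' : (0 : ℝ) < n := Nat.cast_pos.2 hn
  rw [div_le_iff₀ hn', add_mul, div_mul_cancel₀ _ hn'.ne', mul_comm c]
  exact h n

lemma liminf_blockEntropy_le_of_shadowing [MeasurableSpace X] [MeasurableSpace ι]
    [MeasurableSingletonClass ι] {μ : Measure X} [IsProbabilityMeasure μ]
    (hf : MeasurePreserving f μ μ) (ha : Measurable a) (hE : MeasurableSet E) (hN : 0 < N)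
    (hNn : ∀ i, N ≤ n i) (hα₀ : 0 ≤ α) (hα : ∑ i, Real.exp (-α * n i) ≤ 1)
    (hshadow : ∀ x ∉ E, ∃ i, ∀ j : Fin (n i), f^[j] x ∉ E → a (f^[j] x) = v i j)
    (hκ : 0 ≤ κ) (hD₀ : 0 ≤ D) (hD : Real.exp (-D) ≤ 1 / (2 * Fintype.card ι))
    (hDκ : Real.exp (-D) ≤ (1 - Real.exp (-κ)) / Fintype.card ι) :
    atTop.liminf (fun L : ℕ => ((blockEntropy f a μ L / L : ℝ) : EReal)) ≤
      ((α + Real.log 2 / N + κ + D * μ.real E : ℝ) : EReal) := by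
  classical
  let C := shadowCode hκ n (fun i => hN.trans_le (hNn i)) hα v
  set c := shadowCost α κ D N E
  set M := 1 + ∑ i, n i
  have hparse (x : X) : ∃ b, C.len b ≤ M ∧ Real.exp (-birkhoffSum f c (C.len b) x) ≤
      C.weight b (itinerary f a (C.len b) x) := by
    by_cases hx : x ∈ E
    · refine ⟨none, Nat.le_add_right 1 _, le_trans (Real.exp_le_exp.2 ?_) hD⟩
      simpa [C, shadowCode, birkhoffSum_one] using le_shadowCost hα₀ hκ hx
    · obtain ⟨i, hi⟩ := hshadow x hx
      refine ⟨some i, ?_, exp_neg_birkhoffSum_shadowCost_le hκ hN (hNn i) hDκ hi⟩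
      exact (Finset.single_le_sum (fun _ _ => Nat.zero_le _) (Finset.mem_univ i)).trans
        (Nat.le_add_left _ 1)
  rw [← integral_shadowCost hE]
  exact liminf_div_le_of_le_mul_add <| C.blockEntropy_le hf ha
    (shadowCost_nonneg hα₀ hκ hD₀) (integrable_shadowCost hE) hD₀ (b₀ := none) rfl
    (fun _ => hD) hparse

end ShadowCode

section Separation

variable {X ι : Type*} [PseudoEMetricSpace X] [MeasurableSpace X] [BorelSpace X] {μ : Measure X}
  [IsFiniteMeasure μ]

/- With `F ⊆ A` closed and `t` small, both `A \ F` and `Metric.thickening t F \ F` are small, and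
off these two sets a point `t`-close to a point of `A` lies in `F`. -/
lemma exists_small_forall_edist_lt_mem {A : Set X} (hA : MeasurableSet A) {δ : ℝ≥0∞} (hδ : δ ≠ 0) :
    ∃ K, MeasurableSet K ∧ μ K < δ ∧
      ∃ t > 0, ∀ x ∉ K, ∀ y ∉ K, edist x y < ENNReal.ofReal t → x ∈ A → y ∈ A := by
  obtain ⟨F, hFA, hF, hAF⟩ :=
    hA.exists_isClosed_sdiff_lt (measure_ne_top μ A) (ENNReal.half_pos hδ).ne'
  have hthick : ∀ᶠ t in nhdsWithin (0 : ℝ) (Ioi 0), μ (Metric.thickening t F) < μ F + δ / 2 :=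
    (tendsto_measure_thickening_of_isClosed ⟨1, one_pos, measure_ne_top μ _⟩ hF).eventually_lt_const
      (ENNReal.lt_add_right (measure_ne_top μ F) (ENNReal.half_pos hδ).ne')
  obtain ⟨t, ht, ht₀⟩ := (hthick.and self_mem_nhdsWithin).exists
  refine ⟨A \ F ∪ Metric.thickening t F \ F,
    (hA.diff hF.measurableSet).union (Metric.isOpen_thickening.measurableSet.diff hF.measurableSet),
    ?_, t, ht₀, fun x hx y hy hxy hxA => ?_⟩
  · have hdiff : μ (Metric.thickening t F \ F) < δ / 2 := by
      rw [measure_sdiff (Metric.self_subset_thickening ht₀ F) hF.nullMeasurableSet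
        (measure_ne_top μ F)]
      exact ENNReal.sub_lt_of_lt_add (measure_mono (Metric.self_subset_thickening ht₀ F))
        (by rwa [add_comm])
    calc _ ≤ μ (A \ F) + μ (Metric.thickening t F \ F) := measure_union_le _ _
      _ < δ / 2 + δ / 2 := ENNReal.add_lt_add hAF hdiff
      _ = δ := ENNReal.add_halves δ
  · have hxF : x ∈ F := by_contra fun h => hx (Or.inl ⟨hxA, h⟩)
    refine hFA (by_contra fun h => hy (Or.inr ⟨?_, h⟩))
    exact (Metric.mem_thickening_iff_exists_edist_lt _ _).2 ⟨x, hxF, by rwa [edist_comm]⟩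

lemma exists_small_forall_edist_lt_eq [Finite ι] [MeasurableSpace ι] [MeasurableSingletonClass ι]
    {a : X → ι} (ha : Measurable a) {δ : ℝ≥0∞} (hδ : δ ≠ 0) :
    ∃ K, MeasurableSet K ∧ μ K < δ ∧
      ∃ t > 0, ∀ x ∉ K, ∀ y ∉ K, edist x y < ENNReal.ofReal t → a x = a y := by
  obtain ⟨δ', hδ', hsum⟩ := ENNReal.exists_pos_sum_of_countable' hδ ι
  choose K hKmeas hKδ t ht₀ hK using fun i => exists_small_forall_edist_lt_mem (μ := μ)
    (ha (measurableSet_singleton i)) (hδ' i).ne'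
  obtain ⟨s, hst, hs₀⟩ : ∃ s, (∀ i, s ≤ t i) ∧ 0 < s :=
    (((eventually_all.2 fun i => Ioc_mem_nhdsGT (ht₀ i)).mono fun s hs i => (hs i).2).and
      self_mem_nhdsWithin).exists
  refine ⟨⋃ i, K i, .iUnion hKmeas, ?_, s, hs₀, fun x hx y hy hxy => ?_⟩
  · exact (measure_iUnion_le K).trans_lt
      ((ENNReal.tsum_le_tsum fun i => (hKδ i).le).trans_lt hsum)
  · rw [mem_iUnion, not_exists] at hx hy
    exact (hK (a x) x (hx _) y (hy _) (hxy.trans_le (ENNReal.ofReal_le_ofReal (hst _))) rfl).symm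

end Separation

@[simp] lemma birk_zero {X : Type*} (f : X → X) (n : ℕ) (x : X) : birk f (fun _ => 0) n x = 0 := by
  simp [birk]

section Pressure

variable {X : Type*} [MetricSpace X] {f : X → X} {φ : X → ℝ} {Z : Set X} {α ε : ℝ}

lemma exists_cover_of_mZ_eq_zero (h : mZ f φ Z α ε = 0) (N : ℕ) {r : ℝ≥0∞} (hr : r ≠ 0) :
    ∃ c : ℕ → X × ℕ, ((∀ i, N ≤ (c i).2) ∧ Z ⊆ ⋃ i, bowenBall f (c i).1 (c i).2 ε) ∧
      ∑' i, ENNReal.ofReal (Real.exp (-α * (c i).2 + birk f φ (c i).2 (c i).1)) < r := by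
  have hN : Mcov f φ Z α N ε < r :=
    ((le_iSup (fun N => Mcov f φ Z α N ε) N).trans_eq h).trans_lt (pos_iff_ne_zero.2 hr)
  simpa only [Mcov, iInf_lt_iff, exists_prop] using hN

lemma exists_cover_exp_le_one (h : mZ f (fun _ => 0) Z α ε = 0) (N : ℕ) :
    0 < α ∧ ∃ (c : ℕ → X) (n : ℕ → ℕ), (∀ i, N ≤ n i) ∧ Z ⊆ ⋃ i, bowenBall f (c i) (n i) ε ∧
      ∀ s : Finset ℕ, ∑ i ∈ s, Real.exp (-α * n i) ≤ 1 := by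
  obtain ⟨c, ⟨hNc, hZc⟩, hsum⟩ := exists_cover_of_mZ_eq_zero h N one_ne_zero
  simp only [birk_zero, add_zero] at hsum
  refine ⟨?_, fun i => (c i).1, fun i => (c i).2, hNc, hZc, fun s => ?_⟩
  · have hterm := (ENNReal.le_tsum 0).trans_lt hsum
    rw [ENNReal.ofReal_lt_one, Real.exp_lt_one_iff, neg_mul, neg_lt_zero] at hterm
    exact pos_of_mul_pos_left hterm (Nat.cast_nonneg _)
  · have hs := (ENNReal.sum_le_tsum s).trans hsum.le
    rwa [← ENNReal.ofReal_sum_of_nonneg fun i _ => Real.exp_nonneg _, ENNReal.ofReal_le_one] at hs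

variable [MeasurableSpace X] {μ : Measure X}

lemma measurableSet_bowenBall [OpensMeasurableSpace X] (hf : Measurable f) (x : X) (n : ℕ) :
    MeasurableSet (bowenBall f x n ε) := by
  have : bowenBall f x n ε = ⋂ i < n, f^[i] ⁻¹' Metric.ball (f^[i] x) ε := by
    ext y
    simp [bowenBall, dist_comm]
  rw [this]
  exact .iInter fun i => .iInter fun _ => hf.iterate i measurableSet_ball

lemma exists_mZ_eq_zero_of_Pmu_lt {β : EReal} (h : Pmu f φ μ < β) (hε : 0 < ε) :
    ∃ Z, MeasurableSet Z ∧ μ Z = 1 ∧ ∃ α : ℝ, (α : EReal) < β ∧ mZ f φ Z α ε = 0 := by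
  have hlt := (le_iSup₂ (f := fun (ε : ℝ) (_ : 0 < ε) =>
    ⨅ (Z : Set X) (_ : MeasurableSet Z ∧ μ Z = 1), PZeps f φ Z ε) ε hε).trans_lt h
  simp only [PZeps, iInf_lt_iff, exists_prop] at hlt
  obtain ⟨Z, ⟨hZ, hμZ⟩, α, hα, hαβ⟩ := hlt
  exact ⟨Z, hZ, hμZ, α, hαβ, hα⟩

end Pressure

section LowerBound

variable {X ι : Type*} [MeasurableSpace X] {μ : Measure X} [IsProbabilityMeasure μ] {f : X → X}

lemma exists_measure_compl_iUnion_le_lt {Z : Set X} (hμZ : μ Z = 1) {U : ℕ → Set X}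
    (hU : ∀ i, MeasurableSet (U i)) (hZU : Z ⊆ ⋃ i, U i) {δ : ℝ≥0∞} (hδ : δ ≠ 0) :
    ∃ T, μ (⋃ i ≤ T, U i)ᶜ < δ := by
  have hfull : μ (⋃ i, U i) = 1 := le_antisymm prob_le_one (hμZ ▸ measure_mono hZU)
  have htends : Tendsto (fun T => 1 - μ (accumulate U T)) atTop (nhds 0) := by
    simpa [hfull] using ENNReal.Tendsto.sub tendsto_const_nhds
      (tendsto_measure_iUnion_accumulate (μ := μ) (f := U)) (Or.inl ENNReal.one_ne_top)
  obtain ⟨T, hT⟩ := (htends.eventually_lt_const (pos_iff_ne_zero.2 hδ)).exists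
  refine ⟨T, ?_⟩
  rwa [prob_compl_eq_one_sub (.iUnion fun i => .iUnion fun _ => hU i)]

lemma exists_forall_exp_neg_le (s : Set ℝ) (hs : s.Finite) (hpos : ∀ r ∈ s, 0 < r) :
    ∃ D, 0 ≤ D ∧ ∀ r ∈ s, Real.exp (-D) ≤ r := by
  have := (hs.eventually_all (l := atTop) (p := fun r D => Real.exp (-D) ≤ r)).2 fun r hr =>
    (Real.tendsto_exp_neg_atTop_nhds_zero.eventually_le_const (hpos r hr))
  exact ((eventually_ge_atTop 0).and this).exists

variable [MetricSpace X] [BorelSpace X]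

lemma exists_small_exists_forall_dist_lt_eq [Finite ι] [MeasurableSpace ι]
    [MeasurableSingletonClass ι] {a : X → ι} (ha : Measurable a) {δ : ℝ≥0∞} (hδ : δ ≠ 0) :
    ∃ K, MeasurableSet K ∧ μ K < δ ∧
      ∃ ε > 0, ∃ ref : X → ι, ∀ z, ∀ y ∉ K, dist z y < ε → a y = ref z := by
  classical
  obtain ⟨K, hK, hKδ, t, ht, hKa⟩ := exists_small_forall_edist_lt_eq (μ := μ) ha hδ
  let ref (z : X) : ι := if h : ∃ y ∉ K, dist z y < t / 2 then a h.choose else a z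
  refine ⟨K, hK, hKδ, t / 2, half_pos ht, ref, fun z y hy hzy => ?_⟩
  have hz : ∃ y ∉ K, dist z y < t / 2 := ⟨y, hy, hzy⟩
  obtain ⟨hK', hz'⟩ := hz.choose_spec
  simp only [ref, dif_pos hz]
  refine hKa y hy _ hK' (edist_lt_ofReal.2 ?_)
  linarith [dist_triangle_left y hz.choose z]

variable [Fintype ι] [MeasurableSpace ι] [MeasurableSingletonClass ι] {a : X → ι}

lemma liminf_blockEntropy_le_add_of_Pmu_lt (hf : MeasurePreserving f μ μ) (ha : Measurable a)
    {β κ D : ℝ} (h : Pmu f (fun _ => 0) μ < β) {N : ℕ} (hN : 0 < N) (hκ : 0 ≤ κ) (hD₀ : 0 ≤ D)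
    (hD : Real.exp (-D) ≤ 1 / (2 * Fintype.card ι))
    (hDκ : Real.exp (-D) ≤ (1 - Real.exp (-κ)) / Fintype.card ι) {δ : ℝ} (hδ : 0 < δ) :
    atTop.liminf (fun L : ℕ => ((blockEntropy f a μ L / L : ℝ) : EReal)) ≤
      ((β + Real.log 2 / N + κ + D * δ : ℝ) : EReal) := by
  have hδ' : ENNReal.ofReal δ / 2 ≠ 0 := (ENNReal.half_pos (ENNReal.ofReal_pos.2 hδ).ne').ne'
  obtain ⟨K, hK, hKδ, ε, hε, ref, href⟩ :=
    exists_small_exists_forall_dist_lt_eq (μ := μ) ha hδ'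
  obtain ⟨Z, -, hμZ, α, hαβ, hα⟩ := exists_mZ_eq_zero_of_Pmu_lt h hε
  obtain ⟨hα₀, c, n, hNn, hZc, hsum⟩ := exists_cover_exp_le_one hα N
  have hball (i : ℕ) := measurableSet_bowenBall (ε := ε) hf.measurable (c i) (n i)
  obtain ⟨T, hT⟩ := exists_measure_compl_iUnion_le_lt hμZ hball hZc hδ'
  set G := ⋃ i ≤ T, bowenBall f (c i) (n i) ε
  have hE : MeasurableSet (K ∪ Gᶜ) :=
    hK.union (MeasurableSet.iUnion fun i => .iUnion fun _ => hball i).compl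
  have hEδ : μ.real (K ∪ Gᶜ) ≤ δ := ENNReal.toReal_le_of_le_ofReal hδ.le <| by
    rw [← ENNReal.add_halves (ENNReal.ofReal δ)]
    exact (measure_union_le _ _).trans (add_le_add hKδ.le hT.le)
  have hshadow (x : X) (hx : x ∉ K ∪ Gᶜ) : ∃ i : Finset.Iic T, ∀ j : Fin (n i),
      f^[j] x ∉ K ∪ Gᶜ → a (f^[j] x) = ref (f^[j] (c i)) := by
    obtain ⟨i, hiT, hi⟩ := mem_iUnion₂.1 (not_not.1 fun hxG => hx (Or.inr hxG))
    exact ⟨⟨i, Finset.mem_Iic.2 hiT⟩, fun j hj =>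
      href _ _ (fun hjK => hj (Or.inl hjK)) (hi j j.2)⟩
  refine (liminf_blockEntropy_le_of_shadowing hf ha hE hN (fun i : Finset.Iic T => hNn i) hα₀.le
    (by simpa only [Finset.sum_coe_sort _ fun i => Real.exp (-α * n i)] using hsum _)
    hshadow hκ hD₀ hD hDκ).trans (EReal.coe_le_coe_iff.2 ?_)
  have := mul_le_mul_of_nonneg_left hEδ hD₀
  linarith [EReal.coe_lt_coe_iff.1 hαβ]

lemma liminf_blockEntropy_le_Pmu (hf : MeasurePreserving f μ μ) (ha : Measurable a) :
    atTop.liminf (fun L : ℕ => ((blockEntropy f a μ L / L : ℝ) : EReal)) ≤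
      Pmu f (fun _ => 0) μ := by
  refine EReal.le_of_forall_lt_iff_le.1 fun β' hβ' => ?_
  obtain ⟨β, hβ, hββ'⟩ := EReal.lt_iff_exists_real_btwn.1 hβ'
  obtain ⟨η, hη, hβη⟩ : ∃ η > 0, β + η + η + η ≤ β' :=
    ⟨(β' - β) / 3, by linarith [EReal.coe_lt_coe_iff.1 hββ'], by linarith⟩
  have : Nonempty ι := (nonempty_of_isProbabilityMeasure μ).map a
  obtain ⟨D, hD₀, hD⟩ := exists_forall_exp_neg_le
    {1 / (2 * Fintype.card ι : ℝ), (1 - Real.exp (-η)) / Fintype.card ι} (toFinite _) <| by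
      have := sub_pos.2 (Real.exp_lt_one_iff.2 (neg_lt_zero.2 hη))
      rintro r (rfl | rfl) <;> positivity
  obtain ⟨N, hNη, hN⟩ := (((tendsto_const_div_atTop_nhds_zero_nat (Real.log 2)).eventually_le_const
    hη).and (eventually_gt_atTop 0)).exists
  have hDη : D * (η / (D + 1)) ≤ η := by
    rw [mul_div_left_comm]
    exact mul_le_of_le_one_right hη.le (div_le_one_of_le₀ (by linarith) (by linarith))
  refine (liminf_blockEntropy_le_add_of_Pmu_lt hf ha hβ hN hη.le hD₀ (hD _ (by simp))
    (hD _ (by simp)) (δ := η / (D + 1)) (by positivity)).trans (EReal.coe_le_coe_iff.2 ?_)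
  linarith

theorem ksEntropy_le_Pmu (hf : MeasurePreserving f μ μ) :
    ksEntropy f μ ≤ Pmu f (fun _ => 0) μ := by
  refine iSup₂_le fun s hs => ?_
  obtain ⟨a, ha, -, hdyn⟩ := hs.exists_coding
  simpa only [hdyn] using liminf_blockEntropy_le_Pmu hf ha

end LowerBound

section RationalCode

variable {α β : Type*} [Fintype α] [Fintype β]

lemma mul_neg_log_smoothing_le {p : α → ℝ} (hp : ∀ a, 0 ≤ p a) {δ : ℝ} (hδ : 0 ≤ δ) (a : α) :
    p a * -Real.log (smoothing δ (fun a => p a / ∑ a, p a) a) ≤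
      Real.negMulLog (p a) + p a * Real.log (∑ a, p a) + δ * p a := by
  rcases (hp a).eq_or_lt with hpa | hpa
  · simp [← hpa]
  have hsum : 0 < ∑ a, p a :=
    hpa.trans_le (Finset.single_le_sum (fun a _ => hp a) (Finset.mem_univ a))
  have hlog := Real.log_le_log (mul_pos (Real.exp_pos _) (div_pos hpa hsum))
    (exp_neg_mul_le_smoothing (r := fun a => p a / ∑ a, p a) hδ a)
  rw [Real.log_mul (Real.exp_ne_zero _) (div_pos hpa hsum).ne', Real.log_exp,
    Real.log_div hpa.ne' hsum.ne'] at hlog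
  calc _ ≤ p a * (-Real.log (p a) + Real.log (∑ a, p a) + δ) :=
        mul_le_mul_of_nonneg_left (by linarith) hpa.le
    _ = _ := by rw [Real.negMulLog]; ring

/- The conditional distribution `p b a / ∑ a, p b a` has code lengths of mean
`∑ negMulLog (p b a) - ∑ negMulLog (∑ a, p b a)`; smoothing bounds these lengths, and rounding them
up to rational numbers preserves Kraft's inequality. -/
lemma exists_rat_code {p : β → α → ℝ} (hp : ∀ b a, 0 ≤ p b a) {c : ℝ}
    (hc : ∑ b, ∑ a, Real.negMulLog (p b a) - ∑ b, Real.negMulLog (∑ a, p b a) < c) :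
    ∃ ψ : β → α → ℚ, (∀ b, ∑ a, Real.exp (-ψ b a) ≤ 1) ∧ ∑ b, ∑ a, p b a * ψ b a < c := by
  set H := ∑ b, ∑ a, Real.negMulLog (p b a) - ∑ b, Real.negMulLog (∑ a, p b a) with hH
  set S := ∑ b, ∑ a, p b a
  have hS : 0 ≤ S := Finset.sum_nonneg fun b _ => Finset.sum_nonneg fun a _ => hp b a
  obtain ⟨δ, hδ, hδc⟩ : ∃ δ > 0, H + 2 * δ * S < c := by
    refine ⟨(c - H) / (2 * (S + 1)), div_pos (sub_pos.2 hc) (by positivity), ?_⟩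
    have : 2 * ((c - H) / (2 * (S + 1))) * S = (c - H) * (S / (S + 1)) := by field_simp
    have := mul_lt_mul_of_pos_left ((div_lt_one (by positivity)).2 (lt_add_one S)) (sub_pos.2 hc)
    linarith
  let r (b : β) (a : α) : ℝ := p b a / ∑ a, p b a
  have hr (b : β) (a : α) : 0 ≤ r b a := div_nonneg (hp b a) (Finset.sum_nonneg fun a _ => hp b a)
  have hr_sum (b : β) : ∑ a, r b a ≤ 1 := by
    rw [← Finset.sum_div]
    exact div_self_le_one _
  choose ψ hψ_lower hψ_upper using fun b a => exists_rat_btwn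
    (lt_add_of_pos_right (-Real.log (smoothing δ (r b) a)) hδ)
  have kraft (b : β) (a : α) : Real.exp (-ψ b a) ≤ smoothing δ (r b) a := by
    rw [← Real.le_log_iff_exp_le (smoothing_pos hδ (hr b a))]
    linarith [hψ_lower b a]
  have cost (b : β) (a : α) : p b a * ψ b a ≤
      Real.negMulLog (p b a) + p b a * Real.log (∑ a, p b a) + 2 * δ * p b a := by
    linarith [mul_le_mul_of_nonneg_left (hψ_upper b a).le (hp b a),
      mul_neg_log_smoothing_le (hp b) hδ.le a]
  refine ⟨ψ, fun b => ?_, ?_⟩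
  · exact (Finset.sum_le_sum fun a _ => kraft b a).trans (sum_smoothing_le_one hδ.le (hr_sum b))
  calc ∑ b, ∑ a, p b a * ψ b a
      ≤ ∑ b, ∑ a, (Real.negMulLog (p b a) + p b a * Real.log (∑ a, p b a) + 2 * δ * p b a) :=
        Finset.sum_le_sum fun b _ => Finset.sum_le_sum fun a _ => cost b a
    _ = H + 2 * δ * S := by
        simp only [hH, S, Finset.sum_add_distrib, ← Finset.mul_sum, ← Finset.sum_mul,
          Real.negMulLog_eq_neg, Finset.sum_neg_distrib, sub_neg_eq_add]
    _ < c := hδc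

end RationalCode

section ConditionalCode

variable {X ι : Type*} [MeasurableSpace X] {f : X → X} {a : X → ι} {μ : Measure X} [Fintype ι]

lemma sum_wordProb_cons [MeasurableSpace ι] [MeasurableSingletonClass ι] [IsFiniteMeasure μ]
    (hf : MeasurePreserving f μ μ) (ha : Measurable a) {k : ℕ} (u : Fin k → ι) :
    ∑ i, wordProb f a μ (Fin.cons i u : Fin (k + 1) → ι) = wordProb f a μ u := by
  set S : Set X := itinerary f a k ⁻¹' {u}
  have hS : MeasurableSet S :=
    measurable_itinerary hf.measurable ha (measurableSet_singleton u)
  have preimage_cons (i : ι) :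
      itinerary f a (k + 1) ⁻¹' {Fin.cons i u} = a ⁻¹' {i} ∩ f ⁻¹' S := by
    ext x
    have : itinerary f a (k + 1) x = Fin.cons (a x) (itinerary f a k (f x)) :=
      (Fin.cons_self_tail _).symm
    simp only [mem_preimage, mem_singleton_iff, this, Fin.cons_inj, mem_inter_iff, S]
  calc ∑ i, wordProb f a μ (Fin.cons i u : Fin (k + 1) → ι)
      = ∑ i, (μ.restrict (f ⁻¹' S)).real (a ⁻¹' {i}) := by
        refine Finset.sum_congr rfl fun i _ => ?_
        rw [wordProb, preimage_cons, measureReal_restrict_apply (ha (measurableSet_singleton i))]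
    _ = μ.real (f ⁻¹' S) := by
        rw [sum_measureReal_preimage_singleton _ fun i _ => ha (measurableSet_singleton i)]
        simp
    _ = wordProb f a μ u := hf.measureReal_preimage hS.nullMeasurableSet

lemma exists_blockEntropy_succ_sub_lt {b : ℝ} [IsProbabilityMeasure μ]
    (h : atTop.liminf (fun n : ℕ => ((blockEntropy f a μ n / n : ℝ) : EReal)) < b) :
    ∃ k, blockEntropy f a μ (k + 1) - blockEntropy f a μ k < b := by
  by_contra! hge
  have hzero : blockEntropy f a μ 0 = 0 := by
    have (w : Fin 0 → ι) : itinerary f a 0 ⁻¹' {w} = univ :=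
      eq_univ_of_forall fun x => Subsingleton.elim _ _
    simp [blockEntropy, wordProb, this]
  have hlower (n : ℕ) : n * b ≤ blockEntropy f a μ n := by
    rw [← sub_zero (blockEntropy f a μ n), ← hzero, ← Finset.sum_range_sub]
    simpa using Finset.sum_le_sum fun k (_ : k ∈ Finset.range n) => hge k
  obtain ⟨n, hn, hn₀⟩ := ((frequently_lt_of_liminf_lt (by isBoundedDefault) h).and_eventually
    (eventually_gt_atTop 0)).exists
  have hn' : (0 : ℝ) < n := Nat.cast_pos.2 hn₀
  rw [EReal.coe_lt_coe_iff, div_lt_iff₀ hn', mul_comm] at hn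
  exact hn.not_ge (hlower n)

/-- A conditional code: for each word `u` of length `k`, the numbers `ψ (Fin.cons i u)` are code
lengths of the letters `i`, that is, they satisfy Kraft's inequality. -/
def IsConditionalCode {k : ℕ} (ψ : (Fin (k + 1) → ι) → ℝ) : Prop :=
  ∀ u : Fin k → ι, ∑ i, Real.exp (-ψ (Fin.cons i u)) ≤ 1

lemma IsConditionalCode.nonneg {k : ℕ} {ψ : (Fin (k + 1) → ι) → ℝ} (hψ : IsConditionalCode ψ)
    (w : Fin (k + 1) → ι) : 0 ≤ ψ w := by
  have := (Finset.single_le_sum (f := fun i => Real.exp (-ψ (Fin.cons i (Fin.tail w))))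
    (fun _ _ => Real.exp_nonneg _) (Finset.mem_univ (w 0))).trans (hψ (Fin.tail w))
  simpa only [Fin.cons_self_tail, Real.exp_le_one_iff, neg_nonpos] using this

lemma sum_eq_sum_cons {k : ℕ} (F : (Fin (k + 1) → ι) → ℝ) :
    ∑ w, F w = ∑ u : Fin k → ι, ∑ i, F (Fin.cons i u) := by
  rw [← (Fin.consEquiv fun _ : Fin (k + 1) => ι).sum_comp, Fintype.sum_prod_type_right]
  rfl

lemma exists_isConditionalCode [MeasurableSpace ι] [MeasurableSingletonClass ι]
    [IsProbabilityMeasure μ] (hf : MeasurePreserving f μ μ) (ha : Measurable a) {b : ℝ}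
    (h : atTop.liminf (fun n : ℕ => ((blockEntropy f a μ n / n : ℝ) : EReal)) < b) :
    ∃ (k : ℕ) (ψ : (Fin (k + 1) → ι) → ℚ), IsConditionalCode (fun w => (ψ w : ℝ)) ∧
      ∫ x, (ψ (itinerary f a (k + 1) x) : ℝ) ∂μ < b := by
  obtain ⟨k, hk⟩ := exists_blockEntropy_succ_sub_lt h
  have hsub : blockEntropy f a μ k =
      ∑ u : Fin k → ι, Real.negMulLog (∑ i, wordProb f a μ (Fin.cons i u : Fin (k + 1) → ι)) := by
    simp only [sum_wordProb_cons hf ha, blockEntropy]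
  rw [hsub, blockEntropy, sum_eq_sum_cons] at hk
  obtain ⟨ψ, hψ, hψb⟩ := exists_rat_code (fun _ _ => wordProb_nonneg _ _ _ _) hk
  refine ⟨k, fun w => ψ (Fin.tail w) (w 0), hψ, ?_⟩
  rw [integral_comp_itinerary hf.measurable ha fun w => (ψ (Fin.tail w) (w 0) : ℝ),
    sum_eq_sum_cons]
  exact hψb

end ConditionalCode

section CodeLength

variable {X ι : Type*} {f : X → X} {a : X → ι} {k n : ℕ} {ψ : (Fin (k + 1) → ι) → ℝ}

/-- The length of the encoding of a word by the conditional code `ψ`. The last `k` letters serve as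
context only: they are not encoded. -/
def codeLength (ψ : (Fin (k + 1) → ι) → ℝ) (w : Fin (k + n) → ι) : ℝ :=
  ∑ j : Fin n, ψ fun i => w ⟨j + i, by omega⟩

lemma codeLength_itinerary (x : X) :
    codeLength ψ (itinerary f a (k + n) x) =
      birkhoffSum f (fun x => ψ (itinerary f a (k + 1) x)) n x := by
  rw [codeLength, birkhoffSum, Finset.sum_range]
  refine Finset.sum_congr rfl fun j _ => congrArg ψ (funext fun i => ?_)
  simp only [itinerary, ← Function.iterate_add_apply, add_comm]

lemma codeLength_cons (i : ι) (u : Fin (k + n) → ι) :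
    codeLength (n := n + 1) ψ (Fin.cons i u : Fin (k + n + 1) → ι) =
      ψ (Fin.cons i (Fin.take k (k.le_add_right n) u)) + codeLength ψ u := by
  rw [codeLength, Fin.sum_univ_succ]
  congr 2
  · ext j
    refine Fin.cases ?_ (fun j => ?_) j
    · rfl
    · simp only [Fin.val_zero, zero_add, Fin.cons_succ]
      rfl
  · ext j
    refine congrArg ψ (funext fun l => ?_)
    have : (⟨(j.succ : ℕ) + l, by omega⟩ : Fin (k + n + 1)) =
        Fin.succ ⟨j + l, by omega⟩ := Fin.ext (by simp only [Fin.val_succ]; omega)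
    rw [this, Fin.cons_succ]

variable [Fintype ι]

lemma IsConditionalCode.sum_exp_neg_codeLength_le (hψ : IsConditionalCode ψ) (n : ℕ) :
    ∑ w : Fin (k + n) → ι, Real.exp (-codeLength ψ w) ≤ Fintype.card ι ^ k := by
  induction n with
  | zero => simp [codeLength]
  | succ n ih =>
    calc ∑ w : Fin (k + n + 1) → ι, Real.exp (-codeLength (n := n + 1) ψ w)
        = ∑ u : Fin (k + n) → ι, Real.exp (-codeLength ψ u) *
            ∑ i, Real.exp (-ψ (Fin.cons i (Fin.take k (k.le_add_right n) u))) := by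
          rw [sum_eq_sum_cons]
          simp only [codeLength_cons, neg_add_rev, Real.exp_add, Finset.mul_sum]
      _ ≤ ∑ u : Fin (k + n) → ι, Real.exp (-codeLength ψ u) :=
          Finset.sum_le_sum fun u _ => mul_le_of_le_one_right (Real.exp_nonneg _) (hψ _)
      _ ≤ Fintype.card ι ^ k := ih

lemma IsConditionalCode.card_codeLength_lt_le (hψ : IsConditionalCode ψ) (n : ℕ) (c : ℝ) :
    (Finset.univ.filter fun w : Fin (k + n) → ι => codeLength ψ w < c).card ≤
      Fintype.card ι ^ k * Real.exp c := by
  rw [← div_le_iff₀ (Real.exp_pos c), div_eq_mul_inv, ← Real.exp_neg, ← nsmul_eq_mul]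
  calc _ ≤ ∑ w : Fin (k + n) → ι with codeLength ψ w < c, Real.exp (-codeLength ψ w) :=
        Finset.card_nsmul_le_sum _ _ _ fun w hw =>
          Real.exp_le_exp.2 (neg_le_neg (Finset.mem_filter.1 hw).2.le)
    _ ≤ ∑ w : Fin (k + n) → ι, Real.exp (-codeLength ψ w) :=
        Finset.sum_le_univ_sum_of_nonneg fun w => Real.exp_nonneg _
    _ ≤ _ := hψ.sum_exp_neg_codeLength_le n

end CodeLength

section Covering

variable {X : Type*} [MetricSpace X] {f : X → X} {φ : X → ℝ} {Z : Set X} {α ε : ℝ} {N : ℕ}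

lemma Mcov_le_tsum {κ : Type*} [Countable κ] [Infinite κ] {c : κ → X × ℕ}
    (hN : ∀ i, N ≤ (c i).2) (hZ : Z ⊆ ⋃ i, bowenBall f (c i).1 (c i).2 ε) :
    Mcov f φ Z α N ε ≤
      ∑' i, ENNReal.ofReal (Real.exp (-α * (c i).2 + birk f φ (c i).2 (c i).1)) := by
  obtain ⟨_⟩ := nonempty_denumerable κ
  have e : ℕ ≃ κ := (Denumerable.eqv κ).symm
  rw [← e.tsum_eq]
  refine iInf₂_le (c ∘ e) ⟨fun i => hN (e i), hZ.trans ?_⟩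
  exact (e.surjective.iUnion_comp fun i => bowenBall f (c i).1 (c i).2 ε).ge

lemma mZ_iUnion_eq_zero {κ : Type*} [Countable κ] [Nonempty κ] {Z : κ → Set X}
    (h : ∀ i, mZ f φ (Z i) α ε = 0) : mZ f φ (⋃ i, Z i) α ε = 0 := by
  refine ENNReal.iSup_eq_zero.2 fun N =>
    nonpos_iff_eq_zero.1 (le_of_forall_pos_le_add fun r hr => ?_)
  obtain ⟨r', hr', hsum⟩ := ENNReal.exists_pos_sum_of_countable' hr.ne' κ
  choose c hc hcr using fun i => exists_cover_of_mZ_eq_zero (h i) N (hr' i).ne'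
  calc Mcov f φ (⋃ i, Z i) α N ε
      ≤ ∑' p : κ × ℕ, ENNReal.ofReal (Real.exp (-α * (c p.1 p.2).2 +
          birk f φ (c p.1 p.2).2 (c p.1 p.2).1)) := by
        refine Mcov_le_tsum (fun p => (hc p.1).1 p.2) (iUnion_subset fun i => ?_)
        rw [iUnion_prod']
        exact (hc i).2.trans (subset_iUnion_of_subset i subset_rfl)
    _ = ∑' i, ∑' j, ENNReal.ofReal (Real.exp (-α * (c i j).2 + birk f φ (c i j).2 (c i j).1)) :=
        ENNReal.tsum_prod'
    _ ≤ ∑' i, r' i := ENNReal.tsum_le_tsum fun i => (hcr i).le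
    _ ≤ 0 + r := by simpa using hsum.le

lemma Mcov_mono {N' : ℕ} (h : N ≤ N') : Mcov f φ Z α N ε ≤ Mcov f φ Z α N' ε :=
  le_iInf₂ fun c hc => iInf₂_le c ⟨fun i => h.trans (hc.1 i), hc.2⟩

lemma tendsto_tsum_geometric_tail (C : ℝ≥0∞) (hC : C ≠ ∞) {ρ : ℝ≥0∞} (hρ : ρ < 1) :
    Tendsto (fun N => ∑' n, C * ρ ^ (n + N)) atTop (nhds 0) := by
  refine ENNReal.tendsto_sum_nat_add (fun n => C * ρ ^ n) ?_
  rw [ENNReal.tsum_mul_left, ENNReal.tsum_geometric]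
  exact ENNReal.mul_ne_top hC (ENNReal.inv_ne_top.2 (tsub_pos_of_lt hρ).ne')

lemma Mcov_le_tsum_card {P : ℕ → Finset X} (hP : ∀ n, (P n).Nonempty)
    (hZ : ∀ x ∈ Z, ∃ n, ∃ y ∈ P (n + N), x ∈ bowenBall f y (n + N) ε) :
    Mcov f (fun _ => 0) Z α N ε ≤
      ∑' n, (P (n + N)).card * ENNReal.ofReal (Real.exp (-α * (n + N : ℕ))) := by
  have : Infinite (Σ n, P (n + N)) :=
    .of_injective (fun n => ⟨n, _, (hP (n + N)).choose_spec⟩) fun m n h => congrArg Sigma.fst h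
  refine (Mcov_le_tsum (c := fun p : Σ n, P (n + N) => (p.2.1, p.1 + N))
    (fun p => Nat.le_add_left _ _) fun x hx => ?_).trans_eq ?_
  · obtain ⟨n, y, hy, hxy⟩ := hZ x hx
    exact mem_iUnion.2 ⟨⟨n, y, hy⟩, hxy⟩
  · simp [ENNReal.tsum_sigma', birk_zero]

lemma mZ_eq_zero_of_frequently_mem_bowenBall [Nonempty X] {b C : ℝ} (hb : 0 ≤ b) (hbα : b < α)
    (P : ℕ → Finset X) (hP : ∀ n, (P n).card ≤ C * Real.exp (n * b))
    (hZ : ∀ x ∈ Z, ∃ᶠ n in atTop, ∃ y ∈ P n, x ∈ bowenBall f y n ε) :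
    mZ f (fun _ => 0) Z α ε = 0 := by
  classical
  obtain ⟨x₀⟩ := ‹Nonempty X›
  have hP' (n : ℕ) : ((insert x₀ (P n)).card : ℝ) ≤ (C + 1) * Real.exp (n * b) :=
    calc ((insert x₀ (P n)).card : ℝ) ≤ (P n).card + 1 := mod_cast Finset.card_insert_le _ _
      _ ≤ C * Real.exp (n * b) + Real.exp (n * b) :=
        add_le_add (hP n) (Real.one_le_exp (by positivity))
      _ = (C + 1) * Real.exp (n * b) := by ring
  set ρ := ENNReal.ofReal (Real.exp (b - α))
  have hρ : ρ < 1 := by simpa [ρ] using hbα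
  have term_le (n : ℕ) : (insert x₀ (P n)).card * ENNReal.ofReal (Real.exp (-α * n)) ≤
      ENNReal.ofReal (C + 1) * ρ ^ n := by
    have hC : 0 ≤ C + 1 := nonneg_of_mul_nonneg_left ((Nat.cast_nonneg _).trans (hP' n))
      (Real.exp_pos _)
    rw [← ENNReal.ofReal_pow (Real.exp_nonneg _), ← Real.exp_nat_mul, ← ENNReal.ofReal_natCast,
      ← ENNReal.ofReal_mul (Nat.cast_nonneg _), ← ENNReal.ofReal_mul hC]
    refine ENNReal.ofReal_le_ofReal ?_
    calc _ ≤ (C + 1) * Real.exp (n * b) * Real.exp (-α * n) :=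
          mul_le_mul_of_nonneg_right (hP' n) (Real.exp_nonneg _)
      _ = (C + 1) * Real.exp (n * (b - α)) := by rw [mul_assoc, ← Real.exp_add]; ring_nf
  have Mcov_le (N : ℕ) :
      Mcov f (fun _ => 0) Z α N ε ≤ ∑' n, ENNReal.ofReal (C + 1) * ρ ^ (n + N) := by
    refine (Mcov_le_tsum_card (P := fun n => insert x₀ (P n))
      (fun n => Finset.insert_nonempty _ _) fun x hx => ?_).trans
      (ENNReal.tsum_le_tsum fun n => term_le (n + N))
    obtain ⟨n, hn, y, hy, hxy⟩ := frequently_atTop.1 (hZ x hx) N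
    exact ⟨n - N, y, by simp [Nat.sub_add_cancel hn, hy], by rwa [Nat.sub_add_cancel hn]⟩
  refine ENNReal.iSup_eq_zero.2 fun N => nonpos_iff_eq_zero.1 <|
    ge_of_tendsto (tendsto_tsum_geometric_tail (.ofReal (C + 1)) ENNReal.ofReal_ne_top hρ) ?_
  filter_upwards [eventually_ge_atTop N] with N' hN'
  exact (Mcov_mono hN').trans (Mcov_le N')

end Covering

section Ergodic

lemma exists_nat_forall_mul_sub_le {s : ℕ → ℝ} {c : ℝ} (h : ∀ᶠ n : ℕ in atTop, n * c ≤ s n)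
    (hs : ∀ n, 0 ≤ s n) : ∃ K : ℕ, ∀ n : ℕ, n * c - K ≤ s n := by
  obtain ⟨N, hN⟩ := eventually_atTop.1 h
  obtain ⟨K, hK⟩ := exists_nat_ge (N * |c|)
  refine ⟨K, fun n => ?_⟩
  rcases le_total N n with hn | hn
  · exact (sub_le_self _ K.cast_nonneg).trans (hN n hn)
  · have : n * c ≤ N * |c| :=
      (mul_le_mul_of_nonneg_left (le_abs_self c) n.cast_nonneg).trans
        (mul_le_mul_of_nonneg_right (Nat.cast_le.2 hn) (abs_nonneg c))
    linarith [hs n]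

variable {X : Type*} [MeasurableSpace X] {f : X → X} {μ : Measure X} [IsProbabilityMeasure μ]
  {φ : X → ℝ}

lemma mul_measureReal_le_integral_of_le_birkhoffSum (hf : MeasurePreserving f μ μ)
    (hφ : Integrable φ μ) (hφ₀ : 0 ≤ φ) {B : Set X} (hB : MeasurableSet B) {c K : ℝ}
    (h : ∀ x ∈ B, ∀ n : ℕ, n * c - K ≤ birkhoffSum f φ n x) :
    c * μ.real B ≤ ∫ x, φ x ∂μ := by
  have bound (n : ℕ) : (n * c - K) * μ.real B ≤ n * ∫ x, φ x ∂μ := by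
    rw [← integral_birkhoffSum hf hφ, mul_comm, ← smul_eq_mul, ← integral_indicator_const _ hB]
    refine integral_mono ((integrable_const _).indicator hB) (integrable_birkhoffSum hf hφ) ?_
    exact indicator_le' (fun x hx => h x hx n)
      fun x _ => Finset.sum_nonneg fun i _ => hφ₀ (f^[i] x)
  have lim : Tendsto (fun n : ℕ => c * μ.real B - K * μ.real B / n) atTop
      (nhds (c * μ.real B)) := by
    simpa using tendsto_const_nhds.sub (tendsto_const_div_atTop_nhds_zero_nat (K * μ.real B))
  refine le_of_tendsto lim ?_
  filter_upwards [eventually_gt_atTop 0] with n hn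
  have hn' : (0 : ℝ) < n := Nat.cast_pos.2 hn
  rw [sub_le_iff_le_add, ← sub_le_iff_le_add', ← mul_le_mul_iff_right₀ hn', mul_sub,
    mul_div_cancel₀ _ hn'.ne']
  linarith [bound n]

/- The points whose Birkhoff sums stay above `n * c - K`, for some `K`, form a set containing its
preimage; were it of full measure, the integral of `φ` would be at least `c`. -/
lemma ae_frequently_birkhoffSum_lt (hf : Ergodic f μ) (hφ : Integrable φ μ)
    (hφ_meas : Measurable φ) (hφ₀ : 0 ≤ φ) {c : ℝ} (hc : ∫ x, φ x ∂μ < c) :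
    ∀ᵐ x ∂μ, ∃ᶠ n : ℕ in atTop, birkhoffSum f φ n x < n * c := by
  let B (K : ℕ) : Set X := {x | ∀ n : ℕ, n * c - K ≤ birkhoffSum f φ n x}
  have hB (K : ℕ) : MeasurableSet (B K) := by
    refine measurableSet_setOfPred.2 (.forall fun n => measurableSet_setOfPred.1 ?_)
    exact measurableSet_le measurable_const
      (Finset.measurable_fun_sum _ fun i _ => hφ_meas.comp (hf.measurable.iterate i))
  have hB_mono : Monotone B := fun K L hKL x hx n =>
    (sub_le_sub_left (Nat.cast_le.2 hKL) _).trans (hx n)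
  have preimage_subset : f ⁻¹' (⋃ K, B K) ⊆ ⋃ K, B K := by
    intro x hx
    obtain ⟨K, hK : ∀ n : ℕ, n * c - K ≤ birkhoffSum f φ n (f x)⟩ := mem_iUnion.1 hx
    have hφx : 0 ≤ φ x := hφ₀ x
    obtain ⟨L, hL⟩ := exists_nat_ge (K + |c|)
    refine mem_iUnion.2 ⟨L, fun n => ?_⟩
    cases n with
    | zero => simp
    | succ n =>
      rw [birkhoffSum_succ']
      push_cast
      linarith [hK n, le_abs_self c]
  have not_full : ¬ (⋃ K, B K) =ᵐ[μ] univ := fun hfull => by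
    have lim := (tendsto_measure_iUnion_atTop (μ := μ) hB_mono)
    rw [measure_congr hfull, measure_univ] at lim
    have lim_real := ((ENNReal.tendsto_toReal ENNReal.one_ne_top).comp lim).const_mul c
    rw [ENNReal.toReal_one, mul_one] at lim_real
    exact hc.not_ge (le_of_tendsto' lim_real fun K =>
      mul_measureReal_le_integral_of_le_birkhoffSum hf.toMeasurePreserving hφ hφ₀ (hB K)
        fun x hx => hx)
  have hempty : (⋃ K, B K) =ᵐ[μ] (∅ : Set X) :=
    (hf.ae_empty_or_univ_of_preimage_ae_le (MeasurableSet.iUnion hB).nullMeasurableSet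
      preimage_subset.eventuallyLE).resolve_right not_full
  filter_upwards [hempty.mem_iff] with x hx
  contrapose! hx
  obtain ⟨K, hK⟩ := exists_nat_forall_mul_sub_le hx fun n =>
    Finset.sum_nonneg fun i _ => hφ₀ (f^[i] x)
  exact Or.inl ⟨mem_iUnion.2 ⟨K, hK⟩, notMem_empty x⟩

end Ergodic

section SmallPartition

variable {X : Type*} [MeasurableSpace X]

open scoped Classical in
lemma isFinPartition_fibers {β : Type*} (g : SimpleFunc X β) :
    IsFinPartition (g.range.image fun y => g ⁻¹' {y}) := by
  refine ⟨fun A hA => ?_, eq_univ_of_forall fun x => ?_, fun A hA B hB hAB => ?_⟩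
  · obtain ⟨y, -, rfl⟩ := Finset.mem_image.1 hA
    exact g.measurableSet_fiber y
  · exact mem_sUnion.2 ⟨_, Finset.mem_coe.2 (Finset.mem_image_of_mem _ (g.mem_range_self x)), rfl⟩
  · obtain ⟨y, -, rfl⟩ := Finset.mem_image.1 hA
    obtain ⟨z, -, rfl⟩ := Finset.mem_image.1 hB
    exact Disjoint.preimage g (disjoint_singleton.2 fun h => hAB (by rw [h]))

lemma exists_isFinPartition_forall_dist_lt [MetricSpace X] [OpensMeasurableSpace X]
    (hX : TotallyBounded (univ : Set X)) {ε : ℝ} (hε : 0 < ε) :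
    ∃ s : Finset (Set X), IsFinPartition s ∧ ∀ A ∈ s, ∀ x ∈ A, ∀ y ∈ A, dist x y < ε := by
  classical
  rcases isEmpty_or_nonempty X with hX₀ | hX₀
  · exact ⟨∅, by simp [IsFinPartition, univ_eq_empty_iff.2 hX₀], by simp⟩
  obtain ⟨t, ht, hcover⟩ := Metric.totallyBounded_iff.1 hX (ε / 2) (half_pos hε)
  obtain ⟨e, rfl⟩ : ∃ e : ℕ → X, t = range e := by
    refine ht.countable.exists_eq_range ?_
    obtain ⟨y, hy, -⟩ := mem_iUnion₂.1 (hcover (mem_univ hX₀.some))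
    exact ⟨y, hy⟩
  obtain ⟨N, hN⟩ : ∃ N, ∀ y ∈ range e, ∃ k ≤ N, e k = y :=
    ((eventually_all_finite ht).2 fun y ⟨k, hk⟩ =>
      (eventually_ge_atTop k).mono fun N hN => ⟨k, hN, hk⟩).exists
  set g := SimpleFunc.nearestPt e N
  have hg (x : X) : dist (g x) x < ε / 2 := by
    obtain ⟨y, hy, hxy⟩ := mem_iUnion₂.1 (hcover (mem_univ x))
    obtain ⟨k, hk, rfl⟩ := hN y hy
    rw [← edist_lt_ofReal]
    exact (SimpleFunc.edist_nearestPt_le e x hk).trans_lt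
      (edist_lt_ofReal.2 (by rwa [dist_comm]))
  refine ⟨_, isFinPartition_fibers g, fun A hA x hx y hy => ?_⟩
  obtain ⟨z, -, rfl⟩ := Finset.mem_image.1 hA
  obtain ⟨rfl, hyx⟩ : g x = z ∧ g y = z := ⟨hx, hy⟩
  linarith [dist_triangle_left x y (g x), hg x, hyx ▸ hg y]

end SmallPartition

section LowRate

variable {X ι : Type*} {f : X → X} {a : X → ι} {k : ℕ} {ψ : (Fin (k + 1) → ι) → ℝ} {b : ℝ}

/-- The set of points whose orbits are encoded by the conditional code `ψ`, for arbitrarily long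
times, at a rate less than `b` per unit of time. -/
def lowRateSet (f : X → X) (a : X → ι) (ψ : (Fin (k + 1) → ι) → ℝ) (b : ℝ) : Set X :=
  {x | ∃ᶠ n : ℕ in atTop, birkhoffSum f (fun x => ψ (itinerary f a (k + 1) x)) n x < n * b}

lemma measurableSet_lowRateSet [Finite ι] [MeasurableSpace ι] [MeasurableSingletonClass ι]
    [MeasurableSpace X] (hf : Measurable f) (ha : Measurable a) :
    MeasurableSet (lowRateSet f a ψ b) := by
  have : lowRateSet f a ψ b = limsup (fun n : ℕ =>
      {x | birkhoffSum f (fun x => ψ (itinerary f a (k + 1) x)) n x < n * b}) atTop := by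
    ext x
    simp only [lowRateSet, mem_limsup_iff_frequently_mem, mem_ofPred_eq]
  rw [this]
  refine MeasurableSet.measurableSet_limsup fun n => measurableSet_lt ?_ measurable_const
  exact Finset.measurable_fun_sum _ fun i _ =>
    ((measurable_of_finite ψ).comp (measurable_itinerary hf ha)).comp (hf.iterate i)

lemma IsConditionalCode.mZ_lowRateSet_eq_zero [MetricSpace X] [Nonempty X] [Fintype ι]
    (hψ : IsConditionalCode ψ) {α ε : ℝ} (hb : 0 ≤ b) (hbα : b < α)
    (ha : ∀ x y, a x = a y → dist x y < ε) :
    mZ f (fun _ => 0) (lowRateSet f a ψ b) α ε = 0 := by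
  classical
  refine mZ_eq_zero_of_frequently_mem_bowenBall hb hbα
    (fun n => (Finset.univ.filter fun w : Fin (k + n) → ι => codeLength ψ w < n * b).image
      (Function.invFun (itinerary f a (k + n))))
    (fun n => (Nat.cast_le.2 Finset.card_image_le).trans (hψ.card_codeLength_lt_le n _))
    fun x hx => hx.mono fun n hn => ?_
  rw [← codeLength_itinerary] at hn
  refine ⟨_, Finset.mem_image_of_mem _ (Finset.mem_filter.2 ⟨Finset.mem_univ _, hn⟩),
    fun i hi => ha _ _ ?_⟩
  exact congrFun (Function.invFun_eq (f := itinerary f a (k + n)) ⟨x, rfl⟩)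
    ⟨i, hi.trans_le (Nat.le_add_left n k)⟩

lemma isConditionalCode_card [Fintype ι] : IsConditionalCode
    fun _ : Fin (0 + 1) → ι => ((Fintype.card ι : ℚ) : ℝ) := fun _ => by
  have := Real.add_one_le_exp (Fintype.card ι : ℝ)
  rw [Finset.sum_const, Finset.card_univ, nsmul_eq_mul, Real.exp_neg, Rat.cast_natCast,
    ← div_eq_mul_inv]
  exact div_le_one_of_le₀ (by linarith) (Real.exp_nonneg _)

theorem exists_mZ_eq_zero_forall_ergodic [MetricSpace X] [Nonempty X] [MeasurableSpace X]
    [OpensMeasurableSpace X] (hX : TotallyBounded (univ : Set X)) (hf : Measurable f) {α ε : ℝ}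
    (hε : 0 < ε) (hb : 0 ≤ b) (hbα : b < α) :
    ∃ Z, MeasurableSet Z ∧ mZ f (fun _ => 0) Z α ε = 0 ∧ ∀ ν : Measure X,
      IsProbabilityMeasure ν → Ergodic f ν → ksEntropy f ν < b → ν Z = 1 := by
  obtain ⟨s, hs, hsε⟩ := exists_isFinPartition_forall_dist_lt hX hε
  obtain ⟨a, ha, hfib, hdyn⟩ := hs.exists_coding
  have ha_dist (x y : X) (h : a x = a y) : dist x y < ε := hsε _ (hfib (a x)) x rfl y h.symm
  let Code := {p : Σ k, (Fin (k + 1) → Fin s.card) → ℚ // IsConditionalCode fun w => (p.2 w : ℝ)}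
  have : Nonempty Code := ⟨⟨⟨0, _⟩, isConditionalCode_card⟩⟩
  refine ⟨⋃ p : Code, lowRateSet f a (fun w => (p.1.2 w : ℝ)) b,
    .iUnion fun p => measurableSet_lowRateSet hf ha,
    mZ_iUnion_eq_zero fun p => p.2.mZ_lowRateSet_eq_zero hb hbα ha_dist, fun ν _ hν hνb => ?_⟩
  have hrate : atTop.liminf (fun n : ℕ => ((blockEntropy f a ν n / n : ℝ) : EReal)) < b := by
    simp only [← hdyn]
    exact (le_iSup₂ (f := fun (s : Finset (Set X)) (_ : IsFinPartition s) =>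
      atTop.liminf fun n : ℕ => ((dynH f ν s n / n : ℝ) : EReal)) s hs).trans_lt hνb
  obtain ⟨k, ψ, hψ, hψb⟩ := exists_isConditionalCode hν.toMeasurePreserving ha hrate
  have hmem := ae_frequently_birkhoffSum_lt hν
    (integrable_comp_itinerary hf ha fun w => (ψ w : ℝ))
    ((measurable_of_finite fun w => (ψ w : ℝ)).comp (measurable_itinerary hf ha))
    (fun x => hψ.nonneg _) hψb
  rw [← measure_univ (μ := ν)]
  refine measure_congr (eventuallyEq_univ.2 (hmem.mono fun x hx => ?_))
  exact mem_iUnion.2 ⟨⟨⟨k, ψ⟩, hψ⟩, hx⟩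

end LowRate

section ErgodicDecomposition

variable {X : Type*} [TopologicalSpace X] [MeasurableSpace X] [OpensMeasurableSpace X] {f : X → X}
  {J : Set X} {μ : Measure X} {τ : Measure (ProbabilityMeasure X)}

/- Mathlib's own σ-algebra on `ProbabilityMeasure X` is that of the Giry monad; in `IsErgodicDecomp`
it is the Borel σ-algebra of the weak topology. -/
instance : BorelSpace (ProbabilityMeasure X) := ⟨rfl⟩

/- The set of ergodic measures need not be measurable, so that it has full `τ`-measure only in the
sense of outer measure; a property of ergodic measures passes to almost every measure as soon as
the property itself is measurable. -/
lemma IsErgodicDecomp.ae_of_ergodic (hτ : IsErgodicDecomp f J μ τ)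
    {p : ProbabilityMeasure X → Prop} (hp : MeasurableSet {ν | p ν})
    (h : ∀ᵐ ν : ProbabilityMeasure X ∂τ, Ergodic f (ν : Measure X) → p ν) : ∀ᵐ ν ∂τ, p ν := by
  have := hτ.1
  refine (prob_compl_eq_zero_iff hp).2 (le_antisymm prob_le_one ?_)
  rw [← hτ.2.1]
  refine measure_mono_ae ?_
  filter_upwards [h] with ν hν hE using hν hE.1

lemma IsErgodicDecomp.measureReal_eq_integral [IsFiniteMeasure μ]
    (hτ : IsErgodicDecomp f J μ τ) {Z : Set X} (hZ : MeasurableSet Z) :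
    μ.real Z = ∫ ν : ProbabilityMeasure X, (ν : Measure X).real Z ∂τ := by
  simpa [integral_indicator hZ] using
    hτ.2.2 (Z.indicator fun _ => (1 : ℝ)) ((integrable_const _).indicator hZ)

end ErgodicDecomposition

section DecompositionKernel

variable {X : Type*} [TopologicalSpace X] [HasOuterApproxClosed X] [MeasurableSpace X]
  [BorelSpace X] {f : X → X} {J : Set X} {μ : Measure X} {τ : Measure (ProbabilityMeasure X)}

lemma measurable_coe_probabilityMeasure :
    Measurable fun ν : ProbabilityMeasure X => (ν : Measure X) := by
  refine Measurable.measure_of_isPiSystem_of_isProbabilityMeasure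
    (BorelSpace.measurable_eq.trans borel_eq_generateFrom_isClosed) isPiSystem_isClosed
    fun F hF => UpperSemicontinuous.measurable ?_
  rw [upperSemicontinuous_iff_limsup_le]
  exact fun ν => ProbabilityMeasure.limsup_measure_closed_le_of_tendsto tendsto_id hF

lemma measurable_probabilityMeasure_apply {Z : Set X} (hZ : MeasurableSet Z) :
    Measurable fun ν : ProbabilityMeasure X => (ν : Measure X) Z :=
  (Measure.measurable_coe hZ).comp measurable_coe_probabilityMeasure

lemma IsErgodicDecomp.ae_measurePreserving [MeasurableSpace.CountablyGenerated X]
    (hf : Measurable f) (hτ : IsErgodicDecomp f J μ τ) :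
    ∀ᵐ ν : ProbabilityMeasure X ∂τ, MeasurePreserving f (ν : Measure X) ν := by
  let 𝒜 : Set (Set X) := generateSetAlgebra (MeasurableSpace.countableGeneratingSet X)
  have h𝒜 : ‹MeasurableSpace X› = MeasurableSpace.generateFrom 𝒜 := by
    rw [generateFrom_generateSetAlgebra_eq, MeasurableSpace.generateFrom_countableGeneratingSet]
  have h𝒜_measurable : ∀ A ∈ 𝒜, MeasurableSet A := fun A hA =>
    h𝒜 ▸ MeasurableSpace.measurableSet_generateFrom hA
  have h𝒜_countable : 𝒜.Countable :=
    countable_generateSetAlgebra MeasurableSpace.countable_countableGeneratingSet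
  have h𝒜_inv : ∀ᵐ ν : ProbabilityMeasure X ∂τ,
      ∀ A ∈ 𝒜, (ν : Measure X) (f ⁻¹' A) = (ν : Measure X) A :=
    (ae_ball_iff h𝒜_countable).2 fun A hA => hτ.ae_of_ergodic
      (measurableSet_eq_fun (measurable_probabilityMeasure_apply (hf (h𝒜_measurable A hA)))
        (measurable_probabilityMeasure_apply (h𝒜_measurable A hA)))
      (Eventually.of_forall fun ν hν => hν.measure_preimage
        (h𝒜_measurable A hA).nullMeasurableSet)
  filter_upwards [h𝒜_inv] with ν hν
  have := Measure.isProbabilityMeasure_map (μ := (ν : Measure X)) hf.aemeasurable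
  refine ⟨hf, ext_of_generate_finite 𝒜 h𝒜 ?_ (fun A hA => ?_) (by simp)⟩
  · exact fun A hA B hB _ => isSetAlgebra_generateSetAlgebra.inter_mem hA hB
  · rw [Measure.map_apply hf (h𝒜_measurable A hA), hν A hA]

lemma IsErgodicDecomp.measure_eq_one_iff [IsProbabilityMeasure μ] (hτ : IsErgodicDecomp f J μ τ)
    {Z : Set X} (hZ : MeasurableSet Z) :
    μ Z = 1 ↔ ∀ᵐ ν : ProbabilityMeasure X ∂τ, (ν : Measure X) Z = 1 := by
  have := hτ.1
  have hint : Integrable (fun ν : ProbabilityMeasure X => (ν : Measure X).real Zᶜ) τ :=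
    .of_bound (measurable_probabilityMeasure_apply hZ.compl).ennreal_toReal.aestronglyMeasurable 1
      (.of_forall fun ν => by simp)
  have h := integral_eq_zero_iff_of_nonneg (fun ν => measureReal_nonneg) hint
  rw [← hτ.measureReal_eq_integral hZ.compl] at h
  simpa [measureReal_eq_zero_iff, EventuallyEq, prob_compl_eq_zero_iff hZ] using h

end DecompositionKernel

lemma ksEntropy_nonneg {X : Type*} [MeasurableSpace X] (f : X → X) (μ : Measure X)
    [IsProbabilityMeasure μ] : 0 ≤ ksEntropy f μ := by
  refine le_iSup₂_of_le {univ} ⟨by simp, by simp, by simp⟩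
    (le_liminf_of_le (by isBoundedDefault) (Eventually.of_forall fun n => ?_))
  refine EReal.coe_nonneg.2 (div_nonneg (neg_nonneg.2 ?_) n.cast_nonneg)
  exact Finset.sum_nonpos fun w _ => mul_nonpos_of_nonneg_of_nonpos measureReal_nonneg
    (Real.log_nonpos measureReal_nonneg measureReal_le_one)

lemma PZeps_antitone {X : Type*} [MetricSpace X] (f : X → X) (φ : X → ℝ) (Z : Set X) :
    Antitone (PZeps f φ Z) := by
  intro ε ε' h
  refine le_iInf₂ fun α hα => iInf₂_le α (le_bot_iff.1 (le_of_le_of_eq ?_ hα))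
  refine iSup_mono fun N => le_iInf₂ fun c hc => iInf₂_le c ⟨hc.1, hc.2.trans ?_⟩
  exact iUnion_mono fun i y hy j hj => (hy j hj).trans_le h

section EssSup

variable {X : Type*} [MetricSpace X] [MeasurableSpace X] [BorelSpace X] {f : X → X} {J : Set X}
  {μ : Measure X} [IsProbabilityMeasure μ] {τ : Measure (ProbabilityMeasure X)}

lemma IsErgodicDecomp.essSup_Pmu_le (hτ : IsErgodicDecomp f J μ τ) (φ : X → ℝ) :
    essSup (fun ν : ProbabilityMeasure X => Pmu f φ (ν : Measure X)) τ ≤ Pmu f φ μ := by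
  refine EReal.le_of_forall_lt_iff_le.1 fun β hβ => ?_
  choose Z hZ hμZ α hαβ hα using fun k : ℕ =>
    exists_mZ_eq_zero_of_Pmu_lt hβ (Nat.one_div_pos_of_nat (n := k))
  have hν : ∀ᵐ ν : ProbabilityMeasure X ∂τ, ∀ k, (ν : Measure X) (Z k) = 1 :=
    ae_all_iff.2 fun k => (hτ.measure_eq_one_iff (hZ k)).1 (hμZ k)
  refine essSup_le_of_ae_le _ (hν.mono fun ν hν => iSup₂_le fun ε hε => ?_)
  obtain ⟨k, hk⟩ := exists_nat_one_div_lt hε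
  calc ⨅ (Z : Set X) (_ : MeasurableSet Z ∧ (ν : Measure X) Z = 1), PZeps f φ Z ε
      ≤ PZeps f φ (Z k) ε := iInf₂_le (Z k) ⟨hZ k, hν k⟩
    _ ≤ PZeps f φ (Z k) (1 / ((k : ℝ) + 1)) := PZeps_antitone f φ (Z k) hk.le
    _ ≤ α k := iInf₂_le (α k) (hα k)
    _ ≤ β := (hαβ k).le

lemma IsErgodicDecomp.essSup_ksEntropy_le_Pmu [SecondCountableTopology X] (hf : Measurable f)
    (hτ : IsErgodicDecomp f J μ τ) :
    essSup (fun ν : ProbabilityMeasure X => ksEntropy f (ν : Measure X)) τ ≤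
      Pmu f (fun _ => 0) μ :=
  (essSup_mono_ae ((hτ.ae_measurePreserving hf).mono fun _ => ksEntropy_le_Pmu)).trans
    (hτ.essSup_Pmu_le _)

lemma IsErgodicDecomp.Pmu_le_essSup_ksEntropy (hX : TotallyBounded (univ : Set X))
    (hf : Measurable f) (hτ : IsErgodicDecomp f J μ τ) :
    Pmu f (fun _ => 0) μ ≤
      essSup (fun ν : ProbabilityMeasure X => ksEntropy f (ν : Measure X)) τ := by
  have := hτ.1
  have : Nonempty X := μ.nonempty_of_neZero
  refine EReal.le_of_forall_lt_iff_le.1 fun α hα => iSup₂_le fun ε hε => ?_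
  obtain ⟨b, hτb, hbα⟩ := EReal.lt_iff_exists_real_btwn.1 hα
  have hνb : ∀ᵐ ν : ProbabilityMeasure X ∂τ, ksEntropy f (ν : Measure X) < b :=
    ae_lt_of_essSup_lt hτb
  obtain ⟨ν, hν⟩ := hνb.exists
  have hb : 0 ≤ b := EReal.coe_nonneg.1 ((ksEntropy_nonneg f (ν : Measure X)).trans hν.le)
  obtain ⟨Z, hZ, hmZ, hνZ⟩ :=
    exists_mZ_eq_zero_forall_ergodic hX hf hε hb (EReal.coe_lt_coe_iff.1 hbα)
  have hνZ_ae : ∀ᵐ ν : ProbabilityMeasure X ∂τ, (ν : Measure X) Z = 1 :=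
    hτ.ae_of_ergodic (measurable_probabilityMeasure_apply hZ (measurableSet_singleton 1))
      (hνb.mono fun ν hν hE => hνZ ν inferInstance hE hν)
  exact (iInf₂_le Z ⟨hZ, (hτ.measure_eq_one_iff hZ).2 hνZ_ae⟩).trans (iInf₂_le α hmZ)

end EssSup

end Paper

theorem entropyPressure_eq_essSup_ergodic_decomposition_general {X : Type*} [MetricSpace X]
    [MeasurableSpace X] [BorelSpace X] (hX : TotallyBounded (univ : Set X)) {f : X → X}
    {J : Set X} {μ : Measure X} [IsProbabilityMeasure μ] (hf : MeasurePreserving f μ μ)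
    {τ : Measure (ProbabilityMeasure X)} (hτ : IsErgodicDecomp f J μ τ) :
    Pmu f (fun _ => 0) μ =
      essSup (fun ν : ProbabilityMeasure X => ksEntropy f (ν : Measure X)) τ ∧
    ksEntropy f μ ≤ Pmu f (fun _ => 0) μ := by
  have := TopologicalSpace.isSeparable_univ_iff.1 hX.isSeparable
  have := UniformSpace.secondCountable_of_separable X
  exact ⟨(hτ.Pmu_le_essSup_ksEntropy hX hf.measurable).antisymm
    (hτ.essSup_ksEntropy_le_Pmu hf.measurable), ksEntropy_le_Pmu hf⟩

/-- Corollary 4.6: for any ergodic decomposition `τ` of `μ`,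
`E_μ(f) = ess sup {h_ν(f) : ν ∈ E(X,f)}` (essential supremum w.r.t. `τ`);
consequently `E_μ(f) ≥ h_μ(f)`. -/
theorem entropyPressure_eq_essSup_ergodic_decomposition {X : Type*} [MetricSpace X] [CompactSpace X] [MeasurableSpace X] [BorelSpace X]
    (f : X → X) (hf : Continuous f)
    (μ : Measure X) (hp : IsProbabilityMeasure μ) (hinv : MeasurePreserving f μ μ)
    (τ : Measure (MeasureTheory.ProbabilityMeasure X))
    (hτ : IsErgodicDecomp f Set.univ μ τ) :
    Pmu f (fun _ => 0) μ =
      essSup (fun ν : MeasureTheory.ProbabilityMeasure X => ksEntropy f ν.toMeasure) τ ∧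
    ksEntropy f μ ≤ Pmu f (fun _ => 0) μ :=
  entropyPressure_eq_essSup_ergodic_decomposition_general isCompact_univ.totallyBounded hinv hτ
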